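/- Let n ≥ 2 and let W be a normalized double-well potential. There exists a universal constant ℓ₀ > 0 and, for every K > 0, constants ε₁ > 0 and C depending only on n, W and K, with the following property. If ε < ε₁, v ∈ C²(ℝⁿ;[0,1]) is radial decreasing with ∫_{ℝⁿ}V(v) dx = 1 and AC_ε(v) ≤ 2 n ω_n^{1/n} + ℓ₀, and v satisfies −2 ε² Δv = ε v (1−v) E − W'(v) on ℝⁿ for some continuous radial function E with sup_{ℝⁿ}|E| ≤ K, then v(x) = z_ε(x) + f((|x|−R₀)/ε) for every x ∈ ℝⁿ, where f ∈ C²((−R₀/ε, ∞)) satisfies |f(s)| ≤ C ε e^{−|s|/C} for all s > −R₀/ε. -/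

import Mathlib

noncomputable section

open MeasureTheory Real Set Filter

abbrev En (n : ℕ) : Type := EuclideanSpace ℝ (Fin n)

/-- Volume of the unit ball of `ℝⁿ`. -/
def ballVol (n : ℕ) : ℝ := (volume (Metric.ball (0 : En n) 1)).toReal

/-- A normalized double-well potential. -/
structure DoubleWell (W : ℝ → ℝ) : Prop where
  contDiffOn : ContDiffOn ℝ 2 W (Icc 0 1)
  lipschitzSecond : ∃ L : NNReal, LipschitzOnWith L (iteratedDerivWithin 2 W (Icc 0 1)) (Icc 0 1)
  zero_at_zero : W 0 = 0
  zero_at_one : W 1 = 0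
  pos_on : ∀ t ∈ Ioo (0:ℝ) 1, 0 < W t
  second_pos_zero : 0 < iteratedDerivWithin 2 W (Icc 0 1) 0
  second_pos_one : 0 < iteratedDerivWithin 2 W (Icc 0 1) 1
  normalized : ∫ t in (0:ℝ)..1, Real.sqrt (W t) = 1

/-- `Φ(t) = ∫₀ᵗ √W`. -/
def Phi (W : ℝ → ℝ) (t : ℝ) : ℝ := ∫ s in (0:ℝ)..t, Real.sqrt (W s)

/-- `V(t) = Φ(t)^{n/(n-1)}`. -/
def Vpot (n : ℕ) (W : ℝ → ℝ) (t : ℝ) : ℝ := Phi W t ^ ((n : ℝ) / ((n : ℝ) - 1))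

/-- Membership in `H¹(ℝⁿ;[0,1])`. -/
structure H1Box (n : ℕ) (u : En n → ℝ) : Prop where
  mem_Icc : ∀ x, u x ∈ Icc (0:ℝ) 1
  diff : Differentiable ℝ u
  memL2 : MemLp u 2 (volume : Measure (En n))
  grad_memL2 : MemLp (fun x => fderiv ℝ u x) 2 (volume : Measure (En n))

/-- The Allen–Cahn energy. -/
def AC (n : ℕ) (W : ℝ → ℝ) (σ : ℝ) (u : En n → ℝ) : ℝ :=
  σ * (∫ x : En n, ‖fderiv ℝ u x‖ ^ 2) + σ⁻¹ * (∫ x : En n, W (u x))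

/-- The isoperimetric-type infimum `Ψ(σ,m)`. -/
def Psi (n : ℕ) (W : ℝ → ℝ) (σ m : ℝ) : ℝ :=
  sInf ((fun u => AC n W σ u) ''
    {u : En n → ℝ | H1Box n u ∧ (∫ x : En n, Vpot n W (u x)) = m})

/-- `u` is a minimizer of `ψ(ε) = Ψ(ε,1)`. -/
def Minimizes (n : ℕ) (W : ℝ → ℝ) (ε : ℝ) (u : En n → ℝ) : Prop :=
  H1Box n u ∧ (∫ x : En n, Vpot n W (u x)) = 1 ∧ AC n W ε u = Psi n W ε 1

/-- Radial function. -/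
def Radial (n : ℕ) (u : En n → ℝ) : Prop :=
  ∃ ζ : ℝ → ℝ, ∀ x : En n, u x = ζ ‖x‖

/-- Radial decreasing function. -/
def RadialDecreasing (n : ℕ) (u : En n → ℝ) : Prop :=
  ∃ ζ : ℝ → ℝ, AntitoneOn ζ (Ici 0) ∧ ∀ x : En n, u x = ζ ‖x‖

/-- The Laplacian as the trace of the second derivative. -/
def lap (n : ℕ) (u : En n → ℝ) (x : En n) : ℝ :=
  ∑ i : Fin n,
    fderiv ℝ (fun y => fderiv ℝ u y (EuclideanSpace.single i 1)) x (EuclideanSpace.single i 1)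

/-- The optimal transition profile `η`. -/
structure TransitionProfile (W : ℝ → ℝ) (η : ℝ → ℝ) : Prop where
  mem : ∀ s, η s ∈ Ioo (0:ℝ) 1
  init : η 0 = 1/2
  ode : ∀ s, HasDerivAt η (-(Real.sqrt (W (η s)))) s
  anti : StrictAnti η
  tendsto_bot : Tendsto η atBot (nhds 1)
  tendsto_top : Tendsto η atTop (nhds 0)

/-- `d_Φ(u,v)`. -/
def dPhi (n : ℕ) (W : ℝ → ℝ) (u v : En n → ℝ) : ℝ :=
  ∫ x : En n, |Phi W (u x) - Phi W (v x)| ^ ((n : ℝ) / ((n : ℝ) - 1))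

/-- `R₀ = ω_n^{-1/n}`. -/
def R0 (n : ℕ) : ℝ := ballVol n ^ (-(1:ℝ) / (n : ℝ))


/-! ## Monotonicity helpers -/

lemma mono_of_hasDeriv {f f' : ℝ → ℝ} {S : Set ℝ} (hS : Convex ℝ S)
    (hd : ∀ x ∈ S, HasDerivAt f (f' x) x) (h0 : ∀ x ∈ S, 0 ≤ f' x) : MonotoneOn f S := by
  refine monotoneOn_of_hasDerivWithinAt_nonneg hS
    (fun x hx => (hd x hx).continuousAt.continuousWithinAt)
    (fun x hx => (hd x (interior_subset hx)).hasDerivWithinAt)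
    (fun x hx => h0 x (interior_subset hx))

lemma anti_of_hasDeriv {f f' : ℝ → ℝ} {S : Set ℝ} (hS : Convex ℝ S)
    (hd : ∀ x ∈ S, HasDerivAt f (f' x) x) (h0 : ∀ x ∈ S, f' x ≤ 0) : AntitoneOn f S := by
  refine antitoneOn_of_hasDerivWithinAt_nonpos hS
    (fun x hx => (hd x hx).continuousAt.continuousWithinAt)
    (fun x hx => (hd x (interior_subset hx)).hasDerivWithinAt)
    (fun x hx => h0 x (interior_subset hx))

lemma mono_of_hasDerivWithin {f f' : ℝ → ℝ} {S I : Set ℝ} (hS : Convex ℝ S) (hSI : S ⊆ I)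
    (hd : ∀ x ∈ S, HasDerivWithinAt f (f' x) I x) (h0 : ∀ x ∈ S, 0 ≤ f' x) : MonotoneOn f S := by
  refine monotoneOn_of_hasDerivWithinAt_nonneg hS
    (fun x hx => (hd x hx).continuousWithinAt.mono hSI)
    (fun x hx => (hd x (interior_subset hx)).mono (interior_subset.trans hSI))
    (fun x hx => h0 x (interior_subset hx))

/-! ## One-sided analysis of the well -/

lemma well_side {W W1 W2 : ℝ → ℝ}
    (h1 : ∀ x ∈ Icc (0:ℝ) 1, HasDerivWithinAt W (W1 x) (Icc 0 1) x)
    (h2 : ∀ x ∈ Icc (0:ℝ) 1, HasDerivWithinAt W1 (W2 x) (Icc 0 1) x)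
    (hc : ContinuousOn W2 (Icc 0 1)) (h00 : W 0 = 0) (h10 : W1 0 = 0) (h20 : 0 < W2 0) :
    ∃ δ c L : ℝ, 0 < δ ∧ δ < 1/2 ∧ 0 < c ∧ 0 < L ∧
      (∀ x ∈ Icc (0:ℝ) δ, c * x ≤ W1 x ∧ c * x^2 ≤ W x) ∧
      (∀ x ∈ Icc (0:ℝ) 1, |W1 x| ≤ L * x ∧ W x ≤ L * x^2) := by
  have hz : (0:ℝ) ∈ Icc (0:ℝ) 1 := ⟨le_rfl, zero_le_one⟩
  obtain ⟨B, hB⟩ := isCompact_Icc.exists_bound_of_continuousOn hc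
  have hB0 : 0 ≤ B := (norm_nonneg _).trans (hB 0 hz)
  have hev : ∀ᶠ x in nhdsWithin (0:ℝ) (Icc 0 1), W2 0 / 2 < W2 x :=
    (hc 0 hz).eventually (lt_mem_nhds (by linarith))
  obtain ⟨r, hr, hr'⟩ := Metric.mem_nhdsWithin_iff.1 hev
  set δ := min (r/2) (1/4) with hδ
  have hδ0 : 0 < δ := by positivity
  have hδ1 : δ ≤ 1/4 := min_le_right _ _
  have hδr : δ < r := lt_of_le_of_lt (min_le_left _ _) (by linarith)
  have hsub : Icc (0:ℝ) δ ⊆ Icc 0 1 := Icc_subset_Icc_right (by linarith)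
  have hW2 : ∀ x ∈ Icc (0:ℝ) δ, W2 0 / 2 ≤ W2 x := by
    intro x hx
    have : x ∈ Metric.ball (0:ℝ) r ∩ Icc 0 1 := by
      refine ⟨?_, hsub hx⟩
      rw [Metric.mem_ball, dist_zero_right, Real.norm_eq_abs, abs_of_nonneg hx.1]
      linarith [hx.2]
    exact (hr' this).le
  -- lower bounds
  have lin : ∀ k : ℝ, ∀ x, HasDerivWithinAt (fun x => k * x) k (Icc (0:ℝ) 1) x := fun k x => by
    simpa using (hasDerivWithinAt_id x (Icc (0:ℝ) 1)).const_mul k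
  have quad : ∀ k : ℝ, ∀ x, HasDerivWithinAt (fun x => k * x^2) (k * (2 * x)) (Icc (0:ℝ) 1) x :=
    fun k x => by
      simpa using ((hasDerivAt_pow 2 x).const_mul k).hasDerivWithinAt
  have l1 : ∀ x ∈ Icc (0:ℝ) δ, W2 0 / 2 * x ≤ W1 x := by
    intro x hx
    have hm : MonotoneOn (fun x => W1 x - W2 0 / 2 * x) (Icc 0 δ) :=
      mono_of_hasDerivWithin (convex_Icc _ _) hsub
        (fun y hy => (h2 y (hsub hy)).sub (lin _ y)) (fun y hy => by linarith [hW2 y hy])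
    have := hm ⟨le_rfl, hδ0.le⟩ hx hx.1
    simp only [h10] at this; linarith
  have l2 : ∀ x ∈ Icc (0:ℝ) δ, W2 0 / 4 * x^2 ≤ W x := by
    intro x hx
    have hm : MonotoneOn (fun x => W x - W2 0 / 4 * x^2) (Icc 0 δ) :=
      mono_of_hasDerivWithin (convex_Icc _ _) hsub
        (fun y hy => (h1 y (hsub hy)).sub (quad _ y)) (fun y hy => by linarith [l1 y hy])
    have := hm ⟨le_rfl, hδ0.le⟩ hx hx.1
    simp only [h00] at this; linarith
  have u1 : ∀ x ∈ Icc (0:ℝ) 1, |W1 x| ≤ B * x := by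
    intro x hx
    have hm : MonotoneOn (fun x => B * x - W1 x) (Icc 0 1) :=
      mono_of_hasDerivWithin (convex_Icc _ _) subset_rfl
        (fun y hy => (lin _ y).sub (h2 y hy))
        (fun y hy => by linarith [(abs_le.1 (hB y hy)).2])
    have hm' : MonotoneOn (fun x => B * x + W1 x) (Icc 0 1) :=
      mono_of_hasDerivWithin (convex_Icc _ _) subset_rfl
        (fun y hy => (lin _ y).add (h2 y hy))
        (fun y hy => by linarith [(abs_le.1 (hB y hy)).1])
    have a1 := hm hz hx hx.1
    have a2 := hm' hz hx hx.1
    simp only [h10] at a1 a2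
    exact abs_le.2 ⟨by linarith, by linarith⟩
  have u2 : ∀ x ∈ Icc (0:ℝ) 1, W x ≤ B * x^2 := by
    intro x hx
    have hm : MonotoneOn (fun x => B * x^2 - W x) (Icc 0 1) :=
      mono_of_hasDerivWithin (convex_Icc _ _) subset_rfl
        (fun y hy => (quad _ y).sub (h1 y hy))
        (fun y hy => by
          have := (abs_le.1 (u1 y hy)).2
          nlinarith [mul_nonneg hB0 hy.1])
    have a1 := hm hz hx hx.1
    simp only [h00] at a1
    linarith
  refine ⟨δ, W2 0 / 4, B + 1, hδ0, by linarith, by linarith, by linarith, ?_, ?_⟩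
  · intro x hx
    refine ⟨?_, l2 x hx⟩
    have := l1 x hx
    nlinarith [hx.1]
  · intro x hx
    refine ⟨(u1 x hx).trans ?_, (u2 x hx).trans ?_⟩
    · nlinarith [hx.1]
    · nlinarith [sq_nonneg x]

lemma slope_zero {W ζ : ℝ → ℝ} {a : ℝ} (h : HasDerivWithinAt W a (Icc 0 1) 0) (h0 : W 0 = 0)
    (hpos : ∀ x ∈ Ioo (0:ℝ) 1, 0 < W x) (hζ : ∀ s, ζ s ∈ Ioo (0:ℝ) 1)
    (hode : ∀ s, HasDerivAt ζ (-√(W (ζ s))) s) (hlim : Tendsto ζ atTop (nhds 0)) : a = 0 := by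
  rw [hasDerivWithinAt_iff_tendsto_slope] at h
  have hlim' : Tendsto ζ atTop (nhdsWithin 0 (Icc 0 1 \ {0})) := by
    refine tendsto_nhdsWithin_iff.2 ⟨hlim, Eventually.of_forall fun s => ?_⟩
    exact ⟨⟨(hζ s).1.le, (hζ s).2.le⟩, (hζ s).1.ne'⟩
  have hs := h.comp hlim'
  have hsl : ∀ s, slope W 0 (ζ s) = W (ζ s) / ζ s := fun s => by
    rw [slope_def_field, h0, sub_zero, sub_zero]
  have ha : 0 ≤ a := ge_of_tendsto' hs fun s => by
    simp only [Function.comp, hsl]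
    exact (div_pos (hpos _ (hζ s)) (hζ s).1).le
  by_contra hne
  have ha' : 0 < a := lt_of_le_of_ne ha (Ne.symm hne)
  have hev : ∀ᶠ s in atTop, a / 2 < slope W 0 (ζ s) := hs.eventually (lt_mem_nhds (by linarith))
  obtain ⟨S, hS⟩ := eventually_atTop.1 hev
  set k := √(a/2) / 2 with hk
  have hk0 : 0 < k := by positivity
  have hanti : AntitoneOn (fun s => √(ζ s) + k * s) (Ici S) := by
    refine anti_of_hasDeriv (f' := fun s => -√(W (ζ s)) / (2 * √(ζ s)) + k) (convex_Ici S) ?_ ?_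
    · intro s _
      have := ((hode s).sqrt (hζ s).1.ne').add ((hasDerivAt_id s).const_mul k)
      simpa using! this
    · intro s hs
      have h1 := hS s hs
      rw [hsl, lt_div_iff₀ (hζ s).1] at h1
      have h2 : √(a/2) * √(ζ s) ≤ √(W (ζ s)) := by
        rw [← Real.sqrt_mul (by positivity)]
        exact Real.sqrt_le_sqrt h1.le
      have h3 : 0 < √(ζ s) := Real.sqrt_pos.2 (hζ s).1
      have : k ≤ √(W (ζ s)) / (2 * √(ζ s)) := by
        rw [le_div_iff₀ (by positivity), hk]; linarith
      rw [neg_div]; linarith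
  have hu : 0 ≤ √(ζ S) := Real.sqrt_nonneg _
  set s1 := S + (√(ζ S) + 1) / k
  have hs1 : S ≤ s1 := by
    have : 0 ≤ (√(ζ S) + 1) / k := by positivity
    linarith
  have := hanti (mem_Ici.2 le_rfl) hs1 hs1
  simp only at this
  have e : k * s1 = k * S + (√(ζ S) + 1) := by
    simp only [s1]; field_simp
  rw [e] at this
  linarith [Real.sqrt_nonneg (ζ s1)]

/-! ## Quantitative bounds on the potential -/

structure WB (W : ℝ → ℝ) (m M c δ : ℝ) : Prop where
  m0 : 0 < m
  M0 : 0 < M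
  c0 : 0 < c
  δ0 : 0 < δ
  δ1 : δ < 1
  low : ∀ x ∈ Icc (0:ℝ) 1, m * (x * (1 - x)) ≤ √(W x)
  up : ∀ x ∈ Icc (0:ℝ) 1, √(W x) ≤ M * (x * (1 - x))
  d1 : ∀ x ∈ Icc (0:ℝ) 1, |derivWithin W (Icc 0 1) x| ≤ M * (x * (1 - x))
  near : ∀ x ∈ Icc (0:ℝ) 1, 1 - δ ≤ x → c * (1 - x) ≤ - derivWithin W (Icc 0 1) x
  der : ∀ x ∈ Ioo (0:ℝ) 1, HasDerivAt W (derivWithin W (Icc 0 1) x) x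
  cont : ContinuousOn W (Icc 0 1)
  nonneg : ∀ x ∈ Icc (0:ℝ) 1, 0 ≤ W x
  pos : ∀ x ∈ Ioo (0:ℝ) 1, 0 < W x

lemma exists_WB {W η : ℝ → ℝ} (hW : DoubleWell W) (hη : TransitionProfile W η) :
    ∃ m M c δ : ℝ, WB W m M c δ := by
  set W1 := derivWithin W (Icc 0 1) with hW1
  set W2 := derivWithin W1 (Icc 0 1) with hW2
  have hud : UniqueDiffOn ℝ (Icc (0:ℝ) 1) := uniqueDiffOn_Icc zero_lt_one
  have hz : (0:ℝ) ∈ Icc (0:ℝ) 1 := ⟨le_rfl, zero_le_one⟩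
  have ho : (1:ℝ) ∈ Icc (0:ℝ) 1 := ⟨zero_le_one, le_rfl⟩
  have e2 : iteratedDerivWithin 2 W (Icc 0 1) = W2 := by
    rw [iteratedDerivWithin_succ, iteratedDerivWithin_one]
  have hC1 : ContDiffOn ℝ 1 W1 (Icc 0 1) :=
    hW.contDiffOn.derivWithin hud (by norm_num)
  have h1 : ∀ x ∈ Icc (0:ℝ) 1, HasDerivWithinAt W (W1 x) (Icc 0 1) x := fun x hx =>
    (hW.contDiffOn.differentiableOn (by norm_num) x hx).hasDerivWithinAt
  have h2 : ∀ x ∈ Icc (0:ℝ) 1, HasDerivWithinAt W1 (W2 x) (Icc 0 1) x := fun x hx =>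
    (hC1.differentiableOn (by norm_num) x hx).hasDerivWithinAt
  have hc : ContinuousOn W2 (Icc 0 1) := hC1.continuousOn_derivWithin hud le_rfl
  have hnn : ∀ x ∈ Icc (0:ℝ) 1, 0 ≤ W x := by
    intro x hx
    rcases eq_or_lt_of_le hx.1 with h | h
    · rw [← h, hW.zero_at_zero]
    rcases eq_or_lt_of_le hx.2 with h' | h'
    · rw [h', hW.zero_at_one]
    exact (hW.pos_on x ⟨h, h'⟩).le
  -- reflected potential
  have hmaps : MapsTo (fun x : ℝ => 1 - x) (Icc 0 1) (Icc 0 1) := fun x hx =>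
    ⟨by linarith [hx.2], by linarith [hx.1]⟩
  have href : ∀ x, HasDerivWithinAt (fun x : ℝ => 1 - x) (-1) (Icc 0 1) x := fun x => by
    simpa using (hasDerivWithinAt_id x (Icc (0:ℝ) 1)).const_sub 1
  have h1' : ∀ x ∈ Icc (0:ℝ) 1,
      HasDerivWithinAt (fun x => W (1 - x)) ((fun x => - W1 (1 - x)) x) (Icc 0 1) x := fun x hx => by
    have := (h1 (1 - x) (hmaps hx)).comp x (href x) hmaps
    simpa [Function.comp_def] using this
  have h2' : ∀ x ∈ Icc (0:ℝ) 1,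
      HasDerivWithinAt (fun x => - W1 (1 - x)) ((fun x => W2 (1 - x)) x) (Icc 0 1) x := fun x hx => by
    have := ((h2 (1 - x) (hmaps hx)).comp x (href x) hmaps).neg
    simpa [Function.comp_def] using! this
  have hc' : ContinuousOn (fun x => W2 (1 - x)) (Icc 0 1) :=
    hc.comp (by fun_prop) hmaps
  have hW10 : W1 0 = 0 := slope_zero (h1 0 hz) hW.zero_at_zero hW.pos_on hη.mem hη.ode hη.tendsto_top
  have hW11 : W1 1 = 0 := by
    have : - W1 (1 - 0) = 0 := by
      refine slope_zero (ζ := fun s => 1 - η (-s)) (h1' 0 hz) (by simp [hW.zero_at_one]) ?_ ?_ ?_ ?_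
      · intro x hx
        exact hW.pos_on _ ⟨by linarith [hx.2], by linarith [hx.1]⟩
      · intro s
        have := hη.mem (-s)
        exact ⟨by linarith [this.2], by linarith [this.1]⟩
      · intro s
        have := ((hη.ode (-s)).comp s (hasDerivAt_neg s)).const_sub 1
        simpa [Function.comp_def] using this
      · have := (hη.tendsto_bot.comp tendsto_neg_atTop_atBot).const_sub 1
        simpa [Function.comp_def] using this
    simpa using this
  obtain ⟨δa, ca, La, hδa, hδa', hca, hLa, lowa, upa⟩ :=
    well_side h1 h2 hc hW.zero_at_zero hW10 (by rw [← e2]; exact hW.second_pos_zero)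
  obtain ⟨δb, cb, Lb, hδb, hδb', hcb, hLb, lowb, upb⟩ :=
    well_side h1' h2' hc' (by simp [hW.zero_at_one]) (by simp [hW11])
      (by simp only [sub_zero]; rw [← e2]; exact hW.second_pos_one)
  have hcont : ContinuousOn W (Icc 0 1) := hW.contDiffOn.continuousOn
  -- middle
  obtain ⟨x0, hx0, hmin⟩ := (isCompact_Icc (a := δa) (b := 1 - δb)).exists_isMinOn
    ⟨δa, le_rfl, by linarith⟩ (hcont.mono (Icc_subset_Icc hδa.le (by linarith)))
  have hw0 : 0 < W x0 := hW.pos_on x0 ⟨by linarith [hx0.1], by linarith [hx0.2]⟩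
  set k := min (min ca cb) (W x0) with hk
  have hk0 : 0 < k := by positivity
  have hka : k ≤ ca := (min_le_left _ _).trans (min_le_left _ _)
  have hkb : k ≤ cb := (min_le_left _ _).trans (min_le_right _ _)
  have hkw : k ≤ W x0 := min_le_right _ _
  have hlow : ∀ x ∈ Icc (0:ℝ) 1, k * (x * (1 - x))^2 ≤ W x := by
    intro x hx
    have hx0' := hx.1
    have hx1' : 0 ≤ 1 - x := by linarith [hx.2]
    have e1 : (x * (1 - x))^2 ≤ x^2 := by
      apply pow_le_pow_left₀ (by positivity); nlinarith
    have e2 : (x * (1 - x))^2 ≤ (1-x)^2 := by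
      apply pow_le_pow_left₀ (by positivity); nlinarith
    rcases le_total x δa with h | h
    · have := (lowa x ⟨hx0', h⟩).2
      calc k * (x * (1 - x))^2 ≤ ca * x^2 := by gcongr
        _ ≤ _ := this
    rcases le_total (1 - δb) x with h' | h'
    · have := (lowb (1 - x) ⟨hx1', by linarith⟩).2
      simp only [sub_sub_cancel] at this
      calc k * (x * (1 - x))^2 ≤ cb * (1-x)^2 := by gcongr
        _ ≤ _ := this
    · have := hmin ⟨h, h'⟩
      simp only [Set.mem_ofPred_eq] at this
      have e3 : (x * (1 - x))^2 ≤ 1 := by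
        have : x^2 ≤ 1 := by nlinarith [hx.2]
        linarith
      calc k * (x * (1 - x))^2 ≤ W x0 * 1 := by gcongr
        _ ≤ _ := by linarith
  have hup : ∀ x ∈ Icc (0:ℝ) 1, W x ≤ (4 * (La + Lb)) * (x * (1 - x))^2 := by
    intro x hx
    have hx1' : 0 ≤ 1 - x := by linarith [hx.2]
    have hx0' := hx.1
    rcases le_total x (1/2) with h | h
    · have := (upa x hx).2
      have : x^2 ≤ 4 * (x * (1-x))^2 := by
        have : x ≤ 2 * (x * (1-x)) := by nlinarith
        calc x^2 ≤ (2 * (x * (1-x)))^2 := by gcongr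
          _ = _ := by ring
      nlinarith [sq_nonneg (x * (1-x))]
    · have := (upb (1-x) (hmaps hx)).2
      simp only [sub_sub_cancel] at this
      have : (1-x)^2 ≤ 4 * (x * (1-x))^2 := by
        have : 1-x ≤ 2 * (x * (1-x)) := by nlinarith
        calc (1-x)^2 ≤ (2 * (x * (1-x)))^2 := by gcongr
          _ = _ := by ring
      nlinarith [sq_nonneg (x * (1-x))]
  have hd1 : ∀ x ∈ Icc (0:ℝ) 1, |W1 x| ≤ (2 * (La + Lb)) * (x * (1 - x)) := by
    intro x hx
    have hx1' : 0 ≤ 1 - x := by linarith [hx.2]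
    have hx0' := hx.1
    have hxx : 0 ≤ x * (1-x) := by positivity
    rcases le_total x (1/2) with h | h
    · have := (upa x hx).1
      have : x ≤ 2 * (x * (1-x)) := by nlinarith
      nlinarith
    · have := (upb (1-x) (hmaps hx)).1
      simp only [sub_sub_cancel, abs_neg] at this
      have : 1-x ≤ 2 * (x * (1-x)) := by nlinarith
      nlinarith
  set A := 4 * (La + Lb) with hA
  have hA0 : 0 < A := by positivity
  refine ⟨√k, A + √A, cb, δb, by positivity, by positivity, hcb, hδb, by linarith, ?_, ?_, ?_, ?_, ?_,
    hcont, hnn, hW.pos_on⟩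
  · intro x hx
    have hx1' : 0 ≤ 1 - x := by linarith [hx.2]
    have hx0' := hx.1
    apply Real.le_sqrt_of_sq_le
    rw [mul_pow, Real.sq_sqrt hk0.le]
    exact hlow x hx
  · intro x hx
    have hx1' : 0 ≤ 1 - x := by linarith [hx.2]
    have hx0' := hx.1
    have hxx : 0 ≤ x * (1-x) := by positivity
    calc √(W x) ≤ √(A * (x * (1-x))^2) := Real.sqrt_le_sqrt (hup x hx)
      _ = √A * (x * (1-x)) := by rw [Real.sqrt_mul hA0.le, Real.sqrt_sq hxx]
      _ ≤ _ := by nlinarith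
  · intro x hx
    have hx1' : 0 ≤ 1 - x := by linarith [hx.2]
    have hx0' := hx.1
    have hxx : 0 ≤ x * (1-x) := by positivity
    refine (hd1 x hx).trans ?_
    have : 0 ≤ √A := by positivity
    gcongr; linarith
  · intro x hx hxd
    have := (lowb (1-x) ⟨by linarith [hx.2], by linarith⟩).1
    simpa using this
  · intro x hx
    exact (h1 x ⟨hx.1.le, hx.2.le⟩).hasDerivAt (Icc_mem_nhds hx.1 hx.2)


/-! ## Properties of `Φ` and `V` -/

section phi
variable {W : ℝ → ℝ} {m M c δ : ℝ}

lemma sqrtW_cont (wb : WB W m M c δ) : ContinuousOn (fun s => √(W s)) (Icc 0 1) :=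
  Real.continuous_sqrt.comp_continuousOn wb.cont

lemma sqrtW_le (wb : WB W m M c δ) {x : ℝ} (hx : x ∈ Icc (0:ℝ) 1) : √(W x) ≤ M := by
  have h1 : x * (1 - x) ≤ 1 := by nlinarith [hx.1, hx.2]
  nlinarith [wb.up x hx, wb.M0]

lemma phi_sub (wb : WB W m M c δ) {x y : ℝ} (hx : x ∈ Icc (0:ℝ) 1) (hy : y ∈ Icc (0:ℝ) 1) :
    Phi W x - Phi W y = ∫ s in y..x, √(W s) := by
  have hi : ∀ z ∈ Icc (0:ℝ) 1, IntervalIntegrable (fun s => √(W s)) volume 0 z := fun z hz => by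
    apply ContinuousOn.intervalIntegrable
    rw [uIcc_of_le hz.1]
    exact (sqrtW_cont wb).mono (Icc_subset_Icc_right hz.2)
  exact intervalIntegral.integral_interval_sub_left (hi x hx) (hi y hy)

lemma phi_zero : Phi W 0 = 0 := by simp [Phi]

lemma phi_mono (wb : WB W m M c δ) {x y : ℝ} (hy : 0 ≤ y) (hyx : y ≤ x) (hx : x ≤ 1) :
    Phi W y ≤ Phi W x := by
  have := phi_sub wb (x := x) (y := y) ⟨by linarith, hx⟩ ⟨hy, by linarith⟩
  have h2 : 0 ≤ ∫ s in y..x, √(W s) :=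
    intervalIntegral.integral_nonneg hyx fun s _ => Real.sqrt_nonneg _
  linarith

lemma phi_lip (wb : WB W m M c δ) {x y : ℝ} (hy : 0 ≤ y) (hyx : y ≤ x) (hx : x ≤ 1) :
    Phi W x - Phi W y ≤ M * (x - y) := by
  rw [phi_sub wb (x := x) (y := y) ⟨by linarith, hx⟩ ⟨hy, by linarith⟩]
  have := intervalIntegral.norm_integral_le_of_norm_le_const (a := y) (b := x) (C := M)
    (f := fun s => √(W s)) (fun s hs => by
      rw [uIoc_of_le hyx] at hs
      rw [Real.norm_eq_abs, abs_of_nonneg (Real.sqrt_nonneg _)]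
      exact sqrtW_le wb ⟨by linarith [hs.1], by linarith [hs.2]⟩)
  rw [abs_of_nonneg (by linarith)] at this
  exact (le_abs_self _).trans this

lemma phi_deriv (wb : WB W m M c δ) {x : ℝ} (hx : x ∈ Ioo (0:ℝ) 1) :
    HasDerivAt (Phi W) (√(W x)) x := by
  have hcA : ∀ᶠ y in nhds x, ContinuousAt (fun s => √(W s)) y := by
    filter_upwards [Ioo_mem_nhds hx.1 hx.2] with y hy
    exact (sqrtW_cont wb).continuousAt (Icc_mem_nhds hy.1 hy.2)
  refine intervalIntegral.integral_hasDerivAt_right ?_ ?_ hcA.self_of_nhds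
  · apply ContinuousOn.intervalIntegrable
    rw [uIcc_of_le hx.1.le]
    exact (sqrtW_cont wb).mono (Icc_subset_Icc_right hx.2.le)
  · refine ContinuousOn.stronglyMeasurableAtFilter isOpen_Ioo (s := Ioo 0 1) ?_ x hx
    exact (sqrtW_cont wb).mono Ioo_subset_Icc_self

lemma rpow_sub_le {p x y : ℝ} (hp : 1 ≤ p) (hy : 0 ≤ y) (hyx : y ≤ x) (hx : x ≤ 1) :
    x ^ p - y ^ p ≤ p * (x - y) := by
  rcases eq_or_lt_of_le (hy.trans hyx) with h | h
  · have : y = 0 := by linarith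
    subst this; subst h; simp
  have hb := one_add_mul_self_le_rpow_one_add (s := y / x - 1) (by
    have : 0 ≤ y / x := by positivity
    linarith) hp
  rw [add_sub_cancel, Real.div_rpow hy h.le] at hb
  have hxp : 0 < x ^ p := by positivity
  have hxp1 : x ^ p ≤ x := by
    calc x ^ p ≤ x ^ (1:ℝ) := Real.rpow_le_rpow_of_exponent_ge h hx hp
      _ = x := Real.rpow_one x
  have h2 : x ^ p - y ^ p ≤ x ^ p * (p * (1 - y / x)) := by
    have : y ^ p = x ^ p * (y ^ p / x ^ p) := by field_simp
    rw [this]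
    nlinarith
  have h3 : 0 ≤ p * (1 - y / x) := by
    have : y / x ≤ 1 := (div_le_one h).2 hyx
    have : 0 ≤ 1 - y / x := by linarith
    positivity
  calc _ ≤ _ := h2
    _ ≤ x * (p * (1 - y/x)) := by gcongr
    _ = p * (x - y) := by field_simp

lemma rpow_sub_ge {p x y : ℝ} (hp : 1 ≤ p) (hy : 0 < y) (hyx : y ≤ x) :
    y ^ (p - 1) * (x - y) ≤ x ^ p - y ^ p := by
  have hx : 0 < x := by linarith
  have e1 : x ^ p = x ^ (p - 1) * x := by
    rw [← Real.rpow_add_one hx.ne']; simp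
  have e2 : y ^ p = y ^ (p - 1) * y := by
    rw [← Real.rpow_add_one hy.ne']; simp
  have : y ^ (p-1) ≤ x ^ (p-1) := Real.rpow_le_rpow hy.le hyx (by linarith)
  rw [e1, e2]
  nlinarith

lemma pexp {n : ℕ} (hn : 2 ≤ n) : 1 ≤ (n:ℝ) / ((n:ℝ) - 1) ∧ (n:ℝ) / ((n:ℝ) - 1) ≤ 2 := by
  have : (2:ℝ) ≤ n := by exact_mod_cast hn
  constructor
  · rw [le_div_iff₀ (by linarith)]; linarith
  · rw [div_le_iff₀ (by linarith)]; linarith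

variable {n : ℕ}

lemma V_zero (hn : 2 ≤ n) : Vpot n W 0 = 0 := by
  have := (pexp hn).1
  rw [Vpot, phi_zero, Real.zero_rpow (by linarith)]

lemma V_one (hW : DoubleWell W) : Vpot n W 1 = 1 := by
  rw [Vpot, Phi, hW.normalized, Real.one_rpow]

lemma phi_nonneg (wb : WB W m M c δ) {x : ℝ} (hx : x ∈ Icc (0:ℝ) 1) : 0 ≤ Phi W x := by
  have := phi_mono wb le_rfl hx.1 hx.2
  rwa [phi_zero] at this

lemma phi_le_one (hW : DoubleWell W) (wb : WB W m M c δ) {x : ℝ} (hx : x ∈ Icc (0:ℝ) 1) :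
    Phi W x ≤ 1 := by
  have := phi_mono wb hx.1 hx.2 le_rfl
  have e : Phi W 1 = 1 := hW.normalized
  linarith

lemma V_mono (hn : 2 ≤ n) (wb : WB W m M c δ) {x y : ℝ} (hy : 0 ≤ y) (hyx : y ≤ x) (hx : x ≤ 1) :
    Vpot n W y ≤ Vpot n W x := by
  have := (pexp hn).1
  exact Real.rpow_le_rpow (phi_nonneg wb ⟨hy, by linarith⟩) (phi_mono wb hy hyx hx) (by linarith)

lemma V_lip (hn : 2 ≤ n) (hW : DoubleWell W) (wb : WB W m M c δ) {x y : ℝ} (hy : 0 ≤ y)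
    (hyx : y ≤ x) (hx : x ≤ 1) : Vpot n W x - Vpot n W y ≤ 2 * M * (x - y) := by
  have hp := pexp hn
  have h1 := rpow_sub_le hp.1 (phi_nonneg wb (x := y) ⟨hy, by linarith⟩) (phi_mono wb hy hyx hx)
    (phi_le_one hW wb ⟨by linarith, hx⟩)
  have h2 := phi_lip wb hy hyx hx
  have h3 := phi_mono wb hy hyx hx
  simp only [Vpot]
  nlinarith

lemma V_nonneg (wb : WB W m M c δ) {x : ℝ} (hx : x ∈ Icc (0:ℝ) 1) :
    0 ≤ Vpot n W x := Real.rpow_nonneg (phi_nonneg wb hx) _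

lemma V_le_one (hn : 2 ≤ n) (hW : DoubleWell W) (wb : WB W m M c δ) {x : ℝ}
    (hx : x ∈ Icc (0:ℝ) 1) : Vpot n W x ≤ 1 := by
  have := V_mono hn wb hx.1 hx.2 le_rfl
  rwa [V_one hW] at this

lemma V_le (hn : 2 ≤ n) (hW : DoubleWell W) (wb : WB W m M c δ) {x : ℝ}
    (hx : x ∈ Icc (0:ℝ) 1) : Vpot n W x ≤ 2 * M * x := by
  have := V_lip hn hW wb le_rfl hx.1 hx.2
  rw [V_zero hn] at this; linarith

lemma V_ge (hn : 2 ≤ n) (hW : DoubleWell W) (wb : WB W m M c δ) {x : ℝ}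
    (hx : x ∈ Icc (0:ℝ) 1) : 1 - Vpot n W x ≤ 2 * M * (1 - x) := by
  have := V_lip hn hW wb hx.1 hx.2 le_rfl
  rwa [V_one hW] at this

/-! ## Properties of the profile -/

variable {η : ℝ → ℝ}

lemma eta_mem (hη : TransitionProfile W η) (y : ℝ) : η y ∈ Icc (0:ℝ) 1 :=
  ⟨(hη.mem y).1.le, (hη.mem y).2.le⟩

lemma eta_logit (wb : WB W m M c δ) (hη : TransitionProfile W η) :
    Antitone (fun y => Real.log (η y) - Real.log (1 - η y) + m * y) := by
  have hd : ∀ y, HasDerivAt (fun y => Real.log (η y) - Real.log (1 - η y) + m * y)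
      (-√(W (η y)) / η y - (- -√(W (η y))) / (1 - η y) + m) y := by
    intro y
    have h1 := (hη.ode y).log (hη.mem y).1.ne'
    have h2 := ((hη.ode y).const_sub 1).log (by linarith [(hη.mem y).2])
    simpa using! (h1.sub h2).add ((hasDerivAt_id y).const_mul m)
  have := anti_of_hasDeriv convex_univ (fun y _ => hd y) (fun y _ => by
    have h1 := (hη.mem y).1
    have h2 : 0 < 1 - η y := by linarith [(hη.mem y).2]
    have h3 := wb.low _ (eta_mem hη y)
    have : -√(W (η y)) / η y - (- -√(W (η y))) / (1 - η y) = - (√(W (η y)) / (η y * (1 - η y))) := by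
      field_simp; ring
    rw [this]
    have : m ≤ √(W (η y)) / (η y * (1 - η y)) := by
      rw [le_div_iff₀ (by positivity)]; exact h3
    linarith)
  intro a b hab
  exact this (mem_univ _) (mem_univ _) hab

lemma eta_right (wb : WB W m M c δ) (hη : TransitionProfile W η) {y : ℝ} (hy : 0 ≤ y) :
    η y ≤ Real.exp (-m * y) := by
  have := eta_logit wb hη hy
  simp only [hη.init] at this
  norm_num at this
  have h1 := (hη.mem y).1
  have h2 : 0 < 1 - η y := by linarith [(hη.mem y).2]
  rw [← Real.log_le_iff_le_exp h1]
  have : Real.log (1 - η y) ≤ 0 := Real.log_nonpos h2.le (by linarith)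
  linarith

lemma eta_left (wb : WB W m M c δ) (hη : TransitionProfile W η) {y : ℝ} (hy : y ≤ 0) :
    1 - η y ≤ Real.exp (m * y) := by
  have := eta_logit wb hη hy
  simp only [hη.init] at this
  norm_num at this
  have h1 := (hη.mem y).1
  have h2 : 0 < 1 - η y := by linarith [(hη.mem y).2]
  rw [← Real.log_le_iff_le_exp h2]
  have : Real.log (η y) ≤ 0 := Real.log_nonpos h1.le (by linarith)
  linarith

lemma eta_prod (wb : WB W m M c δ) (hη : TransitionProfile W η) (y : ℝ) :
    η y * (1 - η y) ≤ Real.exp (-m * |y|) := by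
  have h1 := (hη.mem y).1
  have h2 : 0 < 1 - η y := by linarith [(hη.mem y).2]
  rcases le_total 0 y with h | h
  · rw [abs_of_nonneg h]
    nlinarith [eta_right wb hη h]
  · rw [abs_of_nonpos h, neg_mul_neg]
    nlinarith [eta_left wb hη h]

lemma eta_lip (wb : WB W m M c δ) (hη : TransitionProfile W η) {a b ℓ : ℝ} (hab : a ≤ b)
    (hℓ : ∀ z ∈ Icc a b, ℓ ≤ |z|) : η a - η b ≤ M * Real.exp (-m * ℓ) * (b - a) := by
  have hm : MonotoneOn (fun y => η y + M * Real.exp (-m * ℓ) * y) (Icc a b) := by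
    refine mono_of_hasDeriv (f' := fun y => -√(W (η y)) + M * Real.exp (-m * ℓ)) (convex_Icc _ _)
      (fun y _ => ?_) (fun y hy => ?_)
    · simpa using! (hη.ode y).add ((hasDerivAt_id y).const_mul (M * Real.exp (-m * ℓ)))
    · have h1 := wb.up _ (eta_mem hη y)
      have h2 := eta_prod wb hη y
      have h3 : Real.exp (-m * |y|) ≤ Real.exp (-m * ℓ) := by
        apply Real.exp_le_exp.2
        have := hℓ y hy
        nlinarith [wb.m0]
      nlinarith [wb.M0]
  have := hm (left_mem_Icc.2 hab) (right_mem_Icc.2 hab) hab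
  simp only at this
  linarith

lemma F_drop (hn : 2 ≤ n) (wb : WB W m M c δ) (hη : TransitionProfile W η) :
    ∃ c0 > 0, ∀ a b : ℝ, -3 ≤ a → a ≤ b → b ≤ 3 →
      c0 * (b - a) ≤ Vpot n W (η a) - Vpot n W (η b) := by
  have hηc : Continuous η := continuous_iff_continuousAt.2 fun y => (hη.ode y).continuousAt
  have hcont : ContinuousOn (fun y => W (η y)) (Icc (-3) 3) :=
    wb.cont.comp hηc.continuousOn (fun y _ => eta_mem hη y)
  obtain ⟨y0, hy0, hmin⟩ := (isCompact_Icc (a := (-3:ℝ)) (b := 3)).exists_isMinOn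
    ⟨0, by norm_num, by norm_num⟩ hcont
  have hw0 : 0 < W (η y0) := wb.pos _ (hη.mem y0)
  have hd : ∀ y, HasDerivAt (fun y => Phi W (η y)) (√(W (η y)) * (-√(W (η y)))) y := fun y =>
    (phi_deriv wb (hη.mem y)).comp y (hη.ode y)
  have hpd : ∀ a b : ℝ, -3 ≤ a → a ≤ b → b ≤ 3 →
      W (η y0) * (b - a) ≤ Phi W (η a) - Phi W (η b) := by
    intro a b ha hab hb
    have hm : AntitoneOn (fun y => Phi W (η y) + W (η y0) * y) (Icc a b) := by
      refine anti_of_hasDeriv (f' := fun y => √(W (η y)) * (-√(W (η y))) + W (η y0))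
        (convex_Icc _ _) (fun y _ => ?_) (fun y hy => ?_)
      · simpa using! (hd y).add ((hasDerivAt_id y).const_mul (W (η y0)))
      · have h1 := hmin (show y ∈ Icc (-3:ℝ) 3 from ⟨by linarith [hy.1], by linarith [hy.2]⟩)
        simp only [Set.mem_ofPred_eq] at h1
        have h2 := Real.mul_self_sqrt (wb.nonneg _ (eta_mem hη y))
        linarith
    have := hm (left_mem_Icc.2 hab) (right_mem_Icc.2 hab) hab
    simp only at this
    linarith
  have hp := pexp hn
  have hΦ3 : 0 < Phi W (η 3) := by
    have h1 := phi_nonneg wb (eta_mem hη 4)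
    have h2 : StrictAntiOn (fun y => Phi W (η y)) univ := by
      refine strictAntiOn_of_deriv_neg convex_univ
        (fun y _ => (hd y).continuousAt.continuousWithinAt) (fun y _ => ?_)
      rw [(hd y).deriv]
      have := Real.sqrt_pos.2 (wb.pos _ (hη.mem y))
      nlinarith
    have := h2 (mem_univ (3:ℝ)) (mem_univ 4) (by norm_num)
    simp only at this
    linarith
  refine ⟨Phi W (η 3) ^ ((n:ℝ) / ((n:ℝ) - 1) - 1) * W (η y0), by positivity, ?_⟩
  intro a b ha hab hb
  have hb3 : Phi W (η 3) ≤ Phi W (η b) :=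
    phi_mono wb (eta_mem hη 3).1 (hη.anti.antitone hb) (eta_mem hη b).2
  have h1 := rpow_sub_ge hp.1 (hΦ3.trans_le hb3)
    (phi_mono wb (eta_mem hη b).1 (hη.anti.antitone hab) (eta_mem hη a).2)
  have h2 := hpd a b ha hab hb
  have h3 : Phi W (η 3) ^ ((n:ℝ) / ((n:ℝ) - 1) - 1) ≤ Phi W (η b) ^ ((n:ℝ) / ((n:ℝ) - 1) - 1) :=
    Real.rpow_le_rpow hΦ3.le hb3 (by linarith)
  have h4 : 0 ≤ W (η y0) * (b - a) := mul_nonneg hw0.le (by linarith)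
  simp only [Vpot]
  calc _ = Phi W (η 3) ^ ((n:ℝ) / ((n:ℝ) - 1) - 1) * (W (η y0) * (b - a)) := by ring
    _ ≤ Phi W (η b) ^ ((n:ℝ) / ((n:ℝ) - 1) - 1) * (Phi W (η a) - Phi W (η b)) := by
        have : 0 < Phi W (η b) := hΦ3.trans_le hb3
        gcongr
    _ ≤ _ := h1

/-! ## The inverse profile -/

noncomputable def Hinv (W : ℝ → ℝ) (x : ℝ) : ℝ := -∫ s in (1/2:ℝ)..x, (√(W s))⁻¹

lemma Hinv_deriv (wb : WB W m M c δ) {x : ℝ} (hx : x ∈ Ioo (0:ℝ) 1) :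
    HasDerivAt (Hinv W) (-(√(W x))⁻¹) x := by
  have hc : ContinuousOn (fun s => (√(W s))⁻¹) (Ioo 0 1) :=
    ((sqrtW_cont wb).mono Ioo_subset_Icc_self).inv₀
      (fun y hy => (Real.sqrt_pos.2 (wb.pos y hy)).ne')
  refine (intervalIntegral.integral_hasDerivAt_right ?_ ?_ ?_).neg
  · apply ContinuousOn.intervalIntegrable
    refine hc.mono ?_
    exact (convex_Ioo (0:ℝ) 1).ordConnected.uIcc_subset ⟨by norm_num, by norm_num⟩ hx
  · exact ContinuousOn.stronglyMeasurableAtFilter isOpen_Ioo hc x hx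
  · exact hc.continuousAt (Ioo_mem_nhds hx.1 hx.2)

lemma Hinv_eta (wb : WB W m M c δ) (hη : TransitionProfile W η) (y : ℝ) : Hinv W (η y) = y := by
  have hd : ∀ y, HasDerivAt (fun y => Hinv W (η y) - y) 0 y := fun y => by
    have := ((Hinv_deriv wb (hη.mem y)).comp y (hη.ode y)).sub (hasDerivAt_id y)
    have h0 := (Real.sqrt_pos.2 (wb.pos _ (hη.mem y))).ne'
    rw [neg_mul_neg, inv_mul_cancel₀ h0, sub_self] at this
    exact this
  have hcst := is_const_of_deriv_eq_zero (fun y => (hd y).differentiableAt)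
    (fun y => (hd y).deriv) y 0
  simp only [hη.init, Hinv, intervalIntegral.integral_same] at hcst
  simp only [Hinv]
  linarith

lemma eta_Hinv (wb : WB W m M c δ) (hη : TransitionProfile W η) {x : ℝ} (hx : x ∈ Ioo (0:ℝ) 1) :
    η (Hinv W x) = x := by
  have hηc : Continuous η := continuous_iff_continuousAt.2 fun y => (hη.ode y).continuousAt
  obtain ⟨a, ha⟩ := (hη.tendsto_bot.eventually (lt_mem_nhds hx.2)).exists
  obtain ⟨b, hb⟩ := (hη.tendsto_top.eventually (gt_mem_nhds hx.1)).exists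
  obtain ⟨y, hy⟩ := mem_range_of_exists_le_of_exists_ge hηc ⟨b, hb.le⟩ ⟨a, ha.le⟩
  rw [← hy, Hinv_eta wb hη]

end phi


/-! ## Radial and weighted integrals -/

lemma ballVol_pos (n : ℕ) : 0 < ballVol n := by
  refine ENNReal.toReal_pos ?_ ?_
  · exact (Metric.measure_ball_pos volume _ one_pos).ne'
  · exact measure_ball_lt_top.ne

lemma R0_pos (n : ℕ) : 0 < R0 n := Real.rpow_pos_of_pos (ballVol_pos n) _

lemma R0_pow {n : ℕ} (hn : 2 ≤ n) : R0 n ^ n * ballVol n = 1 := by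
  have h0 : (n:ℝ) ≠ 0 := by positivity
  rw [R0, ← Real.rpow_natCast, ← Real.rpow_mul (ballVol_pos n).le, div_mul_cancel₀ _ h0,
    Real.rpow_neg_one, inv_mul_cancel₀ (ballVol_pos n).ne']

lemma vol_radial {n : ℕ} (hn : 2 ≤ n) {ε : ℝ} (hε : 0 < ε) (G : ℝ → ℝ)
    (h : ∫ x : En n, G (‖x‖ / ε) = 1) :
    IntegrableOn (fun t => t ^ (n-1) * G t) (Ioi 0) ∧
      ∫ t in Ioi (0:ℝ), t ^ (n-1) * G t = (R0 n / ε) ^ n / n := by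
  have : Nontrivial (En n) := by
    have : Nonempty (Fin n) := ⟨⟨0, by omega⟩⟩
    infer_instance
  have hIntg := integrable_of_integral_eq_one h
  have e1 : Module.finrank ℝ (En n) = n := by simp
  have h1 := (integrable_fun_norm_addHaar (volume : Measure (En n)) (f := fun r => G (r / ε))).1 hIntg
  have h2 := integral_fun_norm_addHaar (volume : Measure (En n)) (fun r => G (r / ε))
  rw [h, e1] at h2
  rw [e1] at h1
  simp only [smul_eq_mul, nsmul_eq_mul] at h1 h2
  have hcong : ∀ t : ℝ, (ε * t) ^ (n-1) * G (ε * t / ε) = ε ^ (n-1) * (t ^ (n-1) * G t) := by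
    intro t
    rw [mul_pow, mul_div_cancel_left₀ _ hε.ne']; ring
  have h3 := (integrableOn_Ioi_comp_mul_left_iff (fun r => r ^ (n-1) * G (r / ε)) 0 hε).2
    (by simpa using h1)
  have h4 := integral_comp_mul_left_Ioi' (fun r => r ^ (n-1) * G (r / ε)) 0 hε
  simp only [hcong, mul_zero, smul_eq_mul] at h3 h4
  have hεn : ε ^ (n-1) ≠ 0 := by positivity
  refine ⟨?_, ?_⟩
  · have := h3.const_mul (ε ^ (n-1))⁻¹
    refine this.congr (Eventually.of_forall fun t => ?_)
    simp only; field_simp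
  · rw [integral_const_mul, ← mul_assoc, ← pow_succ', Nat.sub_add_cancel (by omega)] at h4
    rw [← h4] at h2
    have hb : volume.real (Metric.ball (0 : En n) 1) = ballVol n := rfl
    rw [hb] at h2
    have hn0 : (n:ℝ) ≠ 0 := by positivity
    have hR := R0_pow hn
    rw [div_pow, div_div, eq_div_iff (by positivity)]
    calc _ = (R0 n ^ n * ballVol n) * ((∫ t in Ioi (0:ℝ), t ^ (n-1) * G t) * (ε ^ n * n)) := by
            rw [hR, one_mul]
      _ = R0 n ^ n * (n * (ballVol n * (ε ^ n * ∫ t in Ioi (0:ℝ), t ^ (n-1) * G t))) := by ring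
      _ = _ := by rw [← h2, mul_one]

lemma integrable_exp_abs {b : ℝ} (hb : 0 < b) (T : ℝ) :
    Integrable (fun t : ℝ => Real.exp (-b * |t - T|)) := by
  have h0 : Integrable (fun t : ℝ => Real.exp (-b * |t|)) := by
    rw [← integrableOn_univ, ← Iic_union_Ioi (a := (0:ℝ))]
    refine IntegrableOn.union ?_ ?_
    · refine (integrableOn_exp_mul_Iic hb 0).congr_fun (fun t ht => ?_) measurableSet_Iic
      simp only; rw [abs_of_nonpos ht]; ring_nf
    · refine (exp_neg_integrableOn_Ioi 0 hb).congr_fun (fun t ht => ?_) measurableSet_Ioi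
      simp only; rw [abs_of_pos ht]
  exact h0.comp_sub_right T

lemma wexp_bound (k : ℕ) {c : ℝ} (hc : 0 < c) : ∃ C > 0, ∀ T ≥ 1, ∀ t > 0,
    t ^ k * Real.exp (-c * |t - T|) ≤ C * T ^ k * Real.exp (-(c/2) * |t - T|) := by
  refine ⟨k.factorial * (2 / c) ^ k * Real.exp (c/2), by positivity, fun T hT t ht => ?_⟩
  set u := |t - T| with hu
  have hu0 : 0 ≤ u := abs_nonneg _
  have h1 : t ≤ T * (1 + u) := by
    have := le_abs_self (t - T)
    nlinarith
  have h2 : t ^ k ≤ T ^ k * (1 + u) ^ k := by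
    rw [← mul_pow]; exact pow_le_pow_left₀ ht.le h1 k
  have h3 := Real.pow_div_factorial_le_exp (x := c / 2 * (1 + u)) (by positivity) k
  rw [div_le_iff₀ (by positivity)] at h3
  have h4 : (1 + u) ^ k = (2 / c) ^ k * (c / 2 * (1 + u)) ^ k := by
    rw [← mul_pow]; congr 1; field_simp
  have h5 : (1 + u) ^ k ≤ k.factorial * (2 / c) ^ k * Real.exp (c/2) * Real.exp (c / 2 * u) := by
    rw [h4]
    calc _ ≤ (2 / c) ^ k * (Real.exp (c / 2 * (1 + u)) * k.factorial) := by gcongr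
      _ = _ := by rw [mul_add, mul_one, Real.exp_add]; ring
  have hT0 : 0 ≤ T ^ k := by positivity
  calc t ^ k * Real.exp (-c * u) ≤ T ^ k * (k.factorial * (2 / c) ^ k * Real.exp (c/2) *
        Real.exp (c / 2 * u)) * Real.exp (-c * u) := by
        gcongr
        exact h2.trans (by gcongr)
    _ = k.factorial * (2 / c) ^ k * Real.exp (c/2) * T ^ k *
        (Real.exp (c / 2 * u) * Real.exp (-c * u)) := by ring
    _ = _ := by rw [← Real.exp_add]; congr 2; ring

lemma wexp (k : ℕ) {c : ℝ} (hc : 0 < c) : ∃ C > 0, ∀ T ≥ 1,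
    IntegrableOn (fun t => t ^ k * Real.exp (-c * |t - T|)) (Ioi 0) ∧
    ∫ t in Ioi (0:ℝ), t ^ k * Real.exp (-c * |t - T|) ≤ C * T ^ k := by
  obtain ⟨C, hC, h⟩ := wexp_bound k hc
  set J := ∫ t : ℝ, Real.exp (-(c/2) * |t|) with hJ
  have hJ0 : 0 ≤ J := integral_nonneg fun t => (Real.exp_pos _).le
  refine ⟨C * (J + 1), by positivity, fun T hT => ?_⟩
  have hi : Integrable (fun t : ℝ => C * T ^ k * Real.exp (-(c/2) * |t - T|)) :=
    (integrable_exp_abs (by positivity) T).const_mul _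
  have hI : IntegrableOn (fun t => t ^ k * Real.exp (-c * |t - T|)) (Ioi 0) := by
    refine Integrable.mono' hi.integrableOn ?_ ?_
    · exact Continuous.aestronglyMeasurable (by fun_prop)
    · refine (ae_restrict_iff' measurableSet_Ioi).2 (Eventually.of_forall fun t ht => ?_)
      have ht' : 0 < t := ht
      rw [Real.norm_eq_abs, abs_of_nonneg (by positivity)]
      exact h T hT t ht
  refine ⟨hI, ?_⟩
  have h1 : ∫ t in Ioi (0:ℝ), t ^ k * Real.exp (-c * |t - T|) ≤
      ∫ t in Ioi (0:ℝ), C * T ^ k * Real.exp (-(c/2) * |t - T|) :=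
    setIntegral_mono_on hI hi.integrableOn measurableSet_Ioi (fun t ht => h T hT t ht)
  have h2 : ∫ t in Ioi (0:ℝ), C * T ^ k * Real.exp (-(c/2) * |t - T|) ≤
      ∫ t : ℝ, C * T ^ k * Real.exp (-(c/2) * |t - T|) :=
    setIntegral_le_integral hi (Eventually.of_forall fun t => by
      have : 0 < T := by linarith
      simp only [Pi.zero_apply]; positivity)
  have h3 : ∫ t : ℝ, C * T ^ k * Real.exp (-(c/2) * |t - T|) = C * T ^ k * J := by
    rw [integral_const_mul, integral_sub_right_eq_self (fun t => Real.exp (-(c/2) * |t|)) T]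
  rw [h3] at h2
  have : 0 ≤ C * T ^ k := by
    have : 0 < T := by linarith
    positivity
  nlinarith

lemma key_vol (k : ℕ) {c1 c0 C1 : ℝ} (hc1 : 0 < c1) (hc0 : 0 < c0) (hC1 : 0 < C1) :
    ∃ C2 > 0, ∀ T ≥ 2, ∀ ε > 0, ∀ A : ℝ, ∀ q : ℝ → ℝ,
      IntegrableOn (fun t => t ^ k * q t) (Ioi 0) → ∫ t in Ioi (0:ℝ), t ^ k * q t = 0 →
      (∀ t > 0, -(C1 * ε * Real.exp (-c1 * |t - T|)) ≤ q t) →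
      (∀ t ∈ Icc (T - 1) (T + 1), c0 * A ≤ q t) → A ≤ C2 * ε := by
  obtain ⟨C, hC, hw⟩ := wexp k hc1
  refine ⟨C1 * C * 2 ^ k / (2 * c0), by positivity, ?_⟩
  intro T hT ε hε A q hq hq0 hlow hmid
  rcases le_or_gt A 0 with hA | hA
  · exact hA.trans (by positivity)
  obtain ⟨hI, hle⟩ := hw T (by linarith)
  have hsub : Icc (T-1) (T+1) ⊆ Ioi 0 := fun t ht => by
    have := ht.1
    exact mem_Ioi.2 (by linarith)
  have hTk : 0 < (T/2) ^ k := by positivity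
  have hind : IntegrableOn ((Icc (T-1) (T+1)).indicator (fun _ => c0 * A * (T/2)^k)) (Ioi 0) := by
    refine (Integrable.integrableOn ?_)
    refine (integrable_indicator_iff measurableSet_Icc).2 ?_
    exact integrableOn_const (by simp)
  have hE : IntegrableOn (fun t => C1 * ε * (t ^ k * Real.exp (-c1 * |t - T|))) (Ioi 0) :=
    hI.const_mul _
  have hpt : ∀ t ∈ Ioi (0:ℝ), (Icc (T-1) (T+1)).indicator (fun _ => c0 * A * (T/2)^k) t -
      C1 * ε * (t ^ k * Real.exp (-c1 * |t - T|)) ≤ t ^ k * q t := by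
    intro t ht
    have ht0 : 0 < t := ht
    have htk : 0 < t ^ k := by positivity
    by_cases htm : t ∈ Icc (T-1) (T+1)
    · rw [indicator_of_mem htm]
      have h1 := hmid t htm
      have h2 : (T/2)^k ≤ t^k := pow_le_pow_left₀ (by linarith) (by linarith [htm.1]) k
      have h3 : 0 ≤ C1 * ε * (t ^ k * Real.exp (-c1 * |t - T|)) := by positivity
      have h4 : c0 * A * (T/2)^k ≤ t^k * q t := by
        calc c0 * A * (T/2)^k ≤ c0 * A * t^k := by gcongr
          _ ≤ q t * t^k := by gcongr
          _ = _ := mul_comm _ _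
      linarith
    · rw [indicator_of_notMem htm]
      have := hlow t ht0
      nlinarith
  have hIntg := setIntegral_mono_on (hind.sub hE) hq measurableSet_Ioi hpt
  have e1 : ∫ t in Ioi (0:ℝ), (Icc (T-1) (T+1)).indicator (fun _ => c0 * A * (T/2)^k) t =
      2 * (c0 * A * (T/2)^k) := by
    rw [setIntegral_indicator measurableSet_Icc, inter_eq_right.2 hsub, setIntegral_const]
    simp only [Real.volume_real_Icc, smul_eq_mul]
    rw [max_eq_left (by linarith)]; ring
  have e2 : ∫ t in Ioi (0:ℝ), ((Icc (T-1) (T+1)).indicator (fun _ => c0 * A * (T/2)^k) t -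
      C1 * ε * (t ^ k * Real.exp (-c1 * |t - T|))) = 2 * (c0 * A * (T/2)^k) -
      C1 * ε * ∫ t in Ioi (0:ℝ), (t ^ k * Real.exp (-c1 * |t - T|)) := by
    rw [integral_sub hind hE, e1, integral_const_mul]
  simp only [Pi.sub_apply] at hIntg
  rw [hq0, e2] at hIntg
  have h5 : C1 * ε * ∫ t in Ioi (0:ℝ), (t ^ k * Real.exp (-c1 * |t - T|)) ≤ C1 * ε * (C * T^k) := by
    gcongr
  have h6 : 2 * (c0 * A * (T/2)^k) ≤ C1 * ε * (C * T^k) := by linarith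
  rw [div_pow] at h6
  have hT0 : 0 < T ^ k := by positivity
  rw [div_mul_eq_mul_div, le_div_iff₀ (by positivity)]
  have h7 : 2 * (c0 * A * (T^k / 2^k)) = (A * (2 * c0)) / 2^k * T^k := by ring
  rw [h7] at h6
  have h8 : (A * (2 * c0)) / 2^k ≤ C1 * ε * C := by
    have : C1 * ε * (C * T^k) = (C1 * ε * C) * T^k := by ring
    rw [this] at h6
    exact le_of_mul_le_mul_right h6 hT0
  rw [div_le_iff₀ (by positivity)] at h8
  linarith

lemma step_int (k : ℕ) {T : ℝ} (hT : 0 ≤ T) :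
    IntegrableOn (fun t => t ^ k * (Iic T).indicator (fun _ => (1:ℝ)) t) (Ioi 0) ∧
    ∫ t in Ioi (0:ℝ), t ^ k * (Iic T).indicator (fun _ => (1:ℝ)) t = T ^ (k+1) / (k+1) := by
  have e : (fun t : ℝ => t ^ k * (Iic T).indicator (fun _ => (1:ℝ)) t) =
      (Iic T).indicator (fun t => t ^ k) := by
    ext t
    by_cases h : t ∈ Iic T
    · simp [indicator_of_mem h]
    · simp [indicator_of_notMem h]
  rw [e]
  constructor
  · rw [IntegrableOn, integrable_indicator_iff measurableSet_Iic, IntegrableOn,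
      Measure.restrict_restrict measurableSet_Iic, inter_comm, Ioi_inter_Iic]
    exact (Continuous.integrableOn_Icc (by fun_prop)).mono_set Ioc_subset_Icc_self
  · rw [setIntegral_indicator measurableSet_Iic, Ioi_inter_Iic,
      ← intervalIntegral.integral_of_le hT, integral_pow]
    simp

lemma vol_upper (k : ℕ) {b B : ℝ} (hb : 0 < b) (hB : 0 < B) : ∃ C > 0, ∀ T ≥ 1, ∀ G : ℝ → ℝ,
    IntegrableOn (fun t => t ^ k * G t) (Ioi 0) →
    (∀ t > 0, G t ≤ (Iic T).indicator (fun _ => (1:ℝ)) t + B * Real.exp (-b * |t - T|)) →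
    ∫ t in Ioi (0:ℝ), t ^ k * G t ≤ T ^ (k+1) / (k+1) + C * T ^ k := by
  obtain ⟨C, hC, hw⟩ := wexp k hb
  refine ⟨B * C, by positivity, fun T hT G hG hle => ?_⟩
  obtain ⟨hI, hI'⟩ := hw T hT
  obtain ⟨hS, hS'⟩ := step_int k (T := T) (by linarith)
  have := setIntegral_mono_on hG (hS.add (hI.const_mul B)) measurableSet_Ioi (fun t ht => by
    have ht0 : 0 < t := ht
    have := mul_le_mul_of_nonneg_left (hle t ht) (by positivity : 0 ≤ t^k)
    simp only [Pi.add_apply]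
    linarith)
  simp only [Pi.add_apply] at this
  rw [integral_add hS (hI.const_mul B), hS', integral_const_mul] at this
  nlinarith

lemma vol_lower (k : ℕ) {b B : ℝ} (hb : 0 < b) (hB : 0 < B) : ∃ C > 0, ∀ T ≥ 1, ∀ G : ℝ → ℝ,
    IntegrableOn (fun t => t ^ k * G t) (Ioi 0) →
    (∀ t > 0, (Iic T).indicator (fun _ => (1:ℝ)) t - B * Real.exp (-b * |t - T|) ≤ G t) →
    T ^ (k+1) / (k+1) - C * T ^ k ≤ ∫ t in Ioi (0:ℝ), t ^ k * G t := by
  obtain ⟨C, hC, hw⟩ := wexp k hb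
  refine ⟨B * C, by positivity, fun T hT G hG hle => ?_⟩
  obtain ⟨hI, hI'⟩ := hw T hT
  obtain ⟨hS, hS'⟩ := step_int k (T := T) (by linarith)
  have := setIntegral_mono_on (hS.sub (hI.const_mul B)) hG measurableSet_Ioi (fun t ht => by
    have ht0 : 0 < t := ht
    have := mul_le_mul_of_nonneg_left (hle t ht) (by positivity : 0 ≤ t^k)
    simp only [Pi.sub_apply]
    linarith)
  simp only [Pi.sub_apply] at this
  rw [integral_sub hS (hI.const_mul B), hS', integral_const_mul] at this
  nlinarith


/-! ## The one-dimensional ODE -/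

lemma anti_of_hasDeriv_int {f f' : ℝ → ℝ} {S : Set ℝ} (hS : Convex ℝ S)
    (hd : ∀ x ∈ S, HasDerivAt f (f' x) x) (h0 : ∀ x ∈ interior S, f' x ≤ 0) : AntitoneOn f S := by
  refine antitoneOn_of_hasDerivWithinAt_nonpos hS
    (fun x hx => (hd x hx).continuousAt.continuousWithinAt)
    (fun x hx => (hd x (interior_subset hx)).hasDerivWithinAt)
    (fun x hx => h0 x hx)

structure Sol (n : ℕ) (W : ℝ → ℝ) (K R ε : ℝ) (g g1 g2 E : ℝ → ℝ) : Prop where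
  hn : 2 ≤ n
  K0 : 0 < K
  R0 : 0 < R
  ε0 : 0 < ε
  hg : ∀ t, HasDerivAt g (g1 t) t
  hg1 : ∀ t, HasDerivAt g1 (g2 t) t
  g10 : g1 0 = 0
  neg : ∀ t ≥ 0, g1 t ≤ 0
  mem : ∀ t, g t ∈ Icc (0:ℝ) 1
  ode : ∀ t > 0, 2 * (g2 t + ((n:ℝ) - 1) / t * g1 t) =
    derivWithin W (Icc 0 1) (g t) - ε * g t * (1 - g t) * E t
  hE : ∀ t, |E t| ≤ K
  vol_int : IntegrableOn (fun t => t ^ (n-1) * Vpot n W (g t)) (Ioi 0)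
  vol : ∫ t in Ioi (0:ℝ), t ^ (n-1) * Vpot n W (g t) = (R / ε) ^ n / n

namespace Sol

variable {n : ℕ} {W : ℝ → ℝ} {K R ε m M c δ : ℝ} {g g1 g2 E : ℝ → ℝ}

lemma n1 (S : Sol n W K R ε g g1 g2 E) : (1:ℝ) ≤ (n:ℝ) - 1 := by
  have : (2:ℝ) ≤ n := by exact_mod_cast S.hn
  linarith

lemma anti (S : Sol n W K R ε g g1 g2 E) : AntitoneOn g (Ici 0) :=
  anti_of_hasDeriv (convex_Ici 0) (fun t _ => S.hg t) (fun t ht => S.neg t ht)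

lemma hder (S : Sol n W K R ε g g1 g2 E) (t : ℝ) : HasDerivAt (fun t => 1 - g t) (- g1 t) t :=
  (S.hg t).const_sub 1

lemma lim (wb : WB W m M c δ) (S : Sol n W K R ε g g1 g2 E) : Tendsto g atTop (nhds 0) := by
  rw [Metric.tendsto_atTop]
  by_contra hcon
  push Not at hcon
  obtain ⟨L, hL, hcon⟩ := hcon
  have hge : ∀ t ≥ 0, L ≤ g t := by
    intro t ht
    obtain ⟨s, hs, hs'⟩ := hcon t
    rw [dist_zero_right, Real.norm_eq_abs, abs_of_nonneg (S.mem s).1] at hs'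
    exact hs'.trans (S.anti ht (mem_Ici.2 (le_trans ht hs)) hs)
  have hL1 : L ≤ 1 := (hge 0 le_rfl).trans (S.mem 0).2
  have hVL : 0 < Vpot n W (L/2) := by
    apply Real.rpow_pos_of_pos
    have := phi_sub wb (x := L/2) (y := 0) ⟨by linarith, by linarith⟩ ⟨le_rfl, zero_le_one⟩
    rw [phi_zero, sub_zero] at this
    rw [this]
    apply intervalIntegral.intervalIntegral_pos_of_pos_on
    · apply ContinuousOn.intervalIntegrable
      rw [uIcc_of_le (by linarith)]
      exact (sqrtW_cont wb).mono (Icc_subset_Icc_right (by linarith))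
    · intro x hx
      exact Real.sqrt_pos.2 (wb.pos x ⟨hx.1, by linarith [hx.2]⟩)
    · linarith
  have hIntg : IntegrableOn (fun _ : ℝ => Vpot n W (L/2)) (Ioi 1) := by
    refine Integrable.mono' (S.vol_int.mono_set (Ioi_subset_Ioi zero_le_one)) (by fun_prop) ?_
    refine (ae_restrict_iff' measurableSet_Ioi).2 (Eventually.of_forall fun t ht => ?_)
    have ht' : 1 < t := ht
    rw [Real.norm_eq_abs, abs_of_pos hVL]
    have h1 : Vpot n W (L/2) ≤ Vpot n W (g t) :=
      V_mono S.hn wb (by linarith) (by linarith [hge t (by linarith)]) (S.mem t).2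
    have h2 : 1 ≤ t ^ (n-1) := one_le_pow₀ ht'.le
    nlinarith
  rw [integrableOn_const_iff] at hIntg
  rcases hIntg with h | h
  · exact hVL.ne' (enorm_eq_zero.1 h)
  · simp at h

lemma force (wb : WB W m M c δ) (S : Sol n W K R ε g g1 g2 E) (hεK : ε * K ≤ 1) {t : ℝ}
    (ht : 0 < t) : |g2 t + ((n:ℝ) - 1) / t * g1 t| ≤ (M + 1) / 2 * (g t * (1 - g t)) := by
  have h1 := S.ode t ht
  have h2 := wb.d1 _ (S.mem t)
  have hp : 0 ≤ g t * (1 - g t) := mul_nonneg (S.mem t).1 (by linarith [(S.mem t).2])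
  have h3 : |ε * g t * (1 - g t) * E t| ≤ g t * (1 - g t) := by
    have : ε * g t * (1 - g t) * E t = (g t * (1 - g t)) * (ε * E t) := by ring
    rw [this, abs_mul, abs_of_nonneg hp, abs_mul, abs_of_pos S.ε0]
    have : ε * |E t| ≤ 1 := (mul_le_mul_of_nonneg_left (S.hE t) S.ε0.le).trans hεK
    nlinarith
  rw [abs_le] at h2 h3 ⊢
  constructor <;> linarith [h2.1, h2.2, h3.1, h3.2]

lemma hb (wb : WB W m M c δ) (S : Sol n W K R ε g g1 g2 E) (hεK : ε * K ≤ 1) {t : ℝ}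
    (ht : 0 ≤ t) : - g1 t ≤ (M + 2) * (1 - g t) := by
  set B := M + 2 with hB
  have hM := wb.M0
  have hanti : AntitoneOn (fun t => (- g1 t - B * (1 - g t)) * Real.exp (B * t)) (Ici 0) := by
    refine anti_of_hasDeriv_int (f' := fun t => (-g2 t - B * (- g1 t)) * Real.exp (B * t) +
      (- g1 t - B * (1 - g t)) * (Real.exp (B * t) * B)) (convex_Ici 0) (fun t _ => ?_) ?_
    · have h1 : HasDerivAt (fun t => - g1 t - B * (1 - g t)) (-g2 t - B * (- g1 t)) t :=
        (S.hg1 t).neg.sub ((S.hder t).const_mul B)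
      have h2 : HasDerivAt (fun t => Real.exp (B * t)) (Real.exp (B * t) * B) t := by
        simpa using ((hasDerivAt_id t).const_mul B).exp
      exact h1.mul h2
    · intro t ht
      rw [interior_Ici] at ht
      have ht0 : 0 < t := ht
      have hf := (abs_le.1 (S.force wb hεK ht0)).1
      have hfr : ((n:ℝ) - 1) / t * g1 t ≤ 0 := by
        have := S.n1
        exact mul_nonpos_of_nonneg_of_nonpos (by positivity) (S.neg t ht0.le)
      have hgm := S.mem t
      have : -g2 t ≤ B^2 * (1 - g t) := by
        have h1 : g t * (1 - g t) ≤ 1 - g t := by nlinarith [hgm.1, hgm.2]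
        have h2 : (M+1)/2 * (g t * (1 - g t)) ≤ (M+1)/2 * (1 - g t) := by gcongr
        have h3 : (M+1)/2 * (1 - g t) ≤ B^2 * (1 - g t) := by
          apply mul_le_mul_of_nonneg_right _ (by linarith [hgm.2])
          nlinarith
        linarith
      have he := Real.exp_pos (B * t)
      have : (-g2 t - B^2 * (1 - g t)) * Real.exp (B * t) ≤ 0 :=
        mul_nonpos_of_nonpos_of_nonneg (by linarith) he.le
      linarith
  have h0 := hanti (mem_Ici.2 le_rfl) ht ht
  simp only [S.g10] at h0
  have h1 := (S.mem 0).2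
  by_contra hc
  push Not at hc
  have h2 : 0 < (- g1 t - B * (1 - g t)) * Real.exp (B * t) :=
    mul_pos (by linarith) (Real.exp_pos _)
  have h3 : (-0 - B * (1 - g 0)) * Real.exp (B * 0) ≤ 0 :=
    mul_nonpos_of_nonpos_of_nonneg (by nlinarith) (Real.exp_pos _).le
  linarith

lemma lt_one (wb : WB W m M c δ) (S : Sol n W K R ε g g1 g2 E) (hεK : ε * K ≤ 1) {t : ℝ}
    (ht : 0 ≤ t) : g t < 1 := by
  set B := M + 2 with hB
  have hanti : AntitoneOn (fun t => (1 - g t) * Real.exp (-B * t)) (Ici 0) := by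
    refine anti_of_hasDeriv (f' := fun t => (- g1 t) * Real.exp (-B * t) +
      (1 - g t) * (Real.exp (-B * t) * -B)) (convex_Ici 0) (fun t _ => ?_) ?_
    · have h2 : HasDerivAt (fun t => Real.exp (-B * t)) (Real.exp (-B * t) * -B) t := by
        simpa using ((hasDerivAt_id t).const_mul (-B)).exp
      exact (S.hder t).mul h2
    · intro t ht
      have := S.hb wb hεK ht
      have he := Real.exp_pos (-B * t)
      nlinarith
  by_contra hc
  push Not at hc
  have hl := S.lim wb
  obtain ⟨s, hs, hs'⟩ := ((hl.eventually (gt_mem_nhds (show (0:ℝ) < 1 by norm_num))).and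
    (eventually_ge_atTop t)).exists
  have h0 := hanti ht (mem_Ici.2 (le_trans ht hs')) hs'
  simp only at h0
  have h1 : (1 - g t) * Real.exp (-B * t) ≤ 0 :=
    mul_nonpos_of_nonpos_of_nonneg (by linarith) (Real.exp_pos _).le
  have h2 : 0 < (1 - g s) * Real.exp (-B * s) := mul_pos (by linarith) (Real.exp_pos _)
  linarith

lemma fric (S : Sol n W K R ε g g1 g2 E) {t1 t q : ℝ} (h1 : 0 < t1)
    (hq : ((n:ℝ) - 1) / t1 ≤ q) (ht : t1 ≤ t) : ((n:ℝ) - 1) / t ≤ q := by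
  refine le_trans ?_ hq
  have := S.n1
  gcongr

lemma gb (wb : WB W m M c δ) (S : Sol n W K R ε g g1 g2 E) (hεK : ε * K ≤ 1) {t1 t : ℝ}
    (h1 : 0 < t1) (hf : ((n:ℝ) - 1) / t1 ≤ 1) (ht : t1 ≤ t) : - g1 t ≤ (M + 2) * g t := by
  have hM := wb.M0
  set A := M + 1 with hA
  have hmono : MonotoneOn (fun t => (- g1 t - (M+2) * g t) * Real.exp (-A * t)) (Ici t1) := by
    refine mono_of_hasDeriv (f' := fun t => (-g2 t - (M+2) * g1 t) * Real.exp (-A * t) +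
      (- g1 t - (M+2) * g t) * (Real.exp (-A * t) * -A)) (convex_Ici t1) (fun t _ => ?_) ?_
    · have h1 : HasDerivAt (fun t => - g1 t - (M+2) * g t) (-g2 t - (M+2) * g1 t) t :=
        (S.hg1 t).neg.sub ((S.hg t).const_mul (M+2))
      have h2 : HasDerivAt (fun t => Real.exp (-A * t)) (Real.exp (-A * t) * -A) t := by
        simpa using ((hasDerivAt_id t).const_mul (-A)).exp
      exact h1.mul h2
    · intro t ht
      have ht0 : 0 < t := lt_of_lt_of_le h1 ht
      have hF := (abs_le.1 (S.force wb hεK ht0)).2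
      have hfr := S.fric h1 hf ht
      have hng := S.neg t ht0.le
      have hgm := S.mem t
      have h1 : g t * (1 - g t) ≤ g t := by nlinarith [hgm.1, hgm.2]
      have h2 : (M+1)/2 * (g t * (1 - g t)) ≤ (M+1)/2 * g t := by gcongr
      have h3 : g1 t ≤ ((n:ℝ) - 1) / t * g1 t := by nlinarith
      have h4 : 0 ≤ (-g2 t - (M+2) * g1 t) - A * (- g1 t - (M+2) * g t) := by
        rw [hA]
        nlinarith [hgm.1, mul_nonneg hM.le hgm.1, mul_nonneg hM.le (mul_nonneg hM.le hgm.1)]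
      have he := Real.exp_pos (-A * t)
      nlinarith
  by_contra hc
  push Not at hc
  set k := - g1 t - (M+2) * g t with hk
  have hk0 : 0 < k := by linarith
  have hp : ∀ s ∈ Ici t, k ≤ - g1 s := by
    intro s hs
    have h5 := hmono ht (mem_Ici.2 (le_trans ht hs)) hs
    simp only [← hk] at h5
    have he1 := Real.exp_pos (-A * t)
    have he2 := Real.exp_pos (-A * s)
    have he : Real.exp (-A * s) ≤ Real.exp (-A * t) := by
      apply Real.exp_le_exp.2
      have : t ≤ s := hs
      nlinarith
    have h6 : k * Real.exp (-A * s) ≤ (- g1 s - (M+2) * g s) * Real.exp (-A * s) := by nlinarith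
    have h7 := le_of_mul_le_mul_right h6 he2
    have := (S.mem s).1
    nlinarith
  have hanti : AntitoneOn (fun s => g s + k * s) (Ici t) := by
    refine anti_of_hasDeriv (f' := fun s => g1 s + k) (convex_Ici t) (fun s _ => ?_) ?_
    · simpa using! (S.hg s).add ((hasDerivAt_id s).const_mul k)
    · intro s hs
      linarith [hp s hs]
  have hs : t ≤ t + 2 / k := by
    have : 0 < 2 / k := by positivity
    linarith
  have h8 := hanti (mem_Ici.2 le_rfl) hs hs
  simp only at h8
  have h9 : k * (t + 2 / k) = k * t + 2 := by field_simp
  rw [h9] at h8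
  linarith [(S.mem (t + 2/k)).1, (S.mem t).2]

lemma pos_of (wb : WB W m M c δ) (S : Sol n W K R ε g g1 g2 E) (hεK : ε * K ≤ 1) {t1 t : ℝ}
    (h1 : 0 < t1) (hf : ((n:ℝ) - 1) / t1 ≤ 1) (hp : 0 < g t1) (ht : t1 ≤ t) : 0 < g t := by
  set B := M + 2 with hB
  have hmono : MonotoneOn (fun t => g t * Real.exp (B * t)) (Ici t1) := by
    refine mono_of_hasDeriv (f' := fun t => g1 t * Real.exp (B * t) +
      g t * (Real.exp (B * t) * B)) (convex_Ici t1) (fun t _ => ?_) ?_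
    · have h2 : HasDerivAt (fun t => Real.exp (B * t)) (Real.exp (B * t) * B) t := by
        simpa using ((hasDerivAt_id t).const_mul B).exp
      exact (S.hg t).mul h2
    · intro t ht
      have := S.gb wb hεK h1 hf ht
      have he := Real.exp_pos (B * t)
      nlinarith
  have h5 := hmono (mem_Ici.2 le_rfl) ht ht
  simp only at h5
  have h6 : 0 < g t1 * Real.exp (B * t1) := mul_pos hp (Real.exp_pos _)
  exact pos_of_mul_pos_left (lt_of_lt_of_le h6 h5) (Real.exp_pos _).le

/-- Derivative of the discrepancy and its bound. -/
lemma disc_deriv (wb : WB W m M c δ) (S : Sol n W K R ε g g1 g2 E) {t : ℝ}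
    (hgt : g t ∈ Ioo (0:ℝ) 1) :
    HasDerivAt (fun t => g1 t ^ 2 - W (g t))
      (g1 t * (2 * g2 t - derivWithin W (Icc 0 1) (g t))) t := by
  have h1 := (S.hg1 t).pow 2
  have h2 := (wb.der _ hgt).comp t (S.hg t)
  have h3 := h1.sub h2
  refine h3.congr_deriv ?_
  simp; ring

lemma disc_bound (S : Sol n W K R ε g g1 g2 E) {t κ B ρ : ℝ} (ht : 0 < t)
    (hκ : ((n:ℝ) - 1) / t ≤ κ * ε) (hρ : g t * (1 - g t) ≤ ρ) (hB : - g1 t ≤ B * ρ) :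
    |g1 t * (2 * g2 t - derivWithin W (Icc 0 1) (g t))| ≤
      ε * (2 * κ * B + K) * (- g1 t * ρ) := by
  have h1 := S.ode t ht
  have hng := S.neg t ht.le
  have hp : 0 ≤ g t * (1 - g t) := mul_nonneg (S.mem t).1 (by linarith [(S.mem t).2])
  have hε := S.ε0
  have hf0 : 0 ≤ ((n:ℝ) - 1) / t := by
    have := S.n1
    positivity
  have h2 : |ε * g t * (1 - g t) * E t| ≤ ε * K * ρ := by
    have : ε * g t * (1 - g t) * E t = ε * ((g t * (1 - g t)) * E t) := by ring
    rw [this, abs_mul, abs_of_pos hε, abs_mul, abs_of_nonneg hp, mul_assoc]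
    have : g t * (1 - g t) * |E t| ≤ ρ * K :=
      mul_le_mul hρ (S.hE t) (abs_nonneg _) (hp.trans hρ)
    nlinarith
  have h3 : 0 ≤ ((n:ℝ) - 1) / t * (- g1 t) := mul_nonneg hf0 (by linarith)
  have h4 : ((n:ℝ) - 1) / t * (- g1 t) ≤ κ * ε * (B * ρ) :=
    mul_le_mul hκ hB (by linarith) (hf0.trans hκ)
  have h5 : |2 * g2 t - derivWithin W (Icc 0 1) (g t)| ≤ ε * (2 * κ * B + K) * ρ := by
    have e : 2 * g2 t - derivWithin W (Icc 0 1) (g t) =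
      2 * (((n:ℝ) - 1) / t * (- g1 t)) - ε * g t * (1 - g t) * E t := by linarith
    rw [e, abs_le]
    rw [abs_le] at h2
    constructor <;> nlinarith [h2.1, h2.2]
  rw [abs_mul, abs_of_nonpos hng]
  calc _ ≤ - g1 t * (ε * (2 * κ * B + K) * ρ) :=
        mul_le_mul_of_nonneg_left h5 (by linarith)
    _ = _ := by ring

lemma disc_right (wb : WB W m M c δ) (S : Sol n W K R ε g g1 g2 E) (hεK : ε * K ≤ 1) {t1 t κ : ℝ}
    (h1 : 0 < t1) (hκ : ((n:ℝ) - 1) / t1 ≤ κ * ε) (hκ1 : κ * ε ≤ 1) (hp : 0 < g t1)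
    (ht : t1 ≤ t) : |g1 t ^ 2 - W (g t)| ≤ ε * (2 * κ * (M+2) + K) * g t ^ 2 := by
  set C := ε * (2 * κ * (M+2) + K) with hC
  have hf1 := hκ.trans hκ1
  have hmem : ∀ t ∈ Ici t1, g t ∈ Ioo (0:ℝ) 1 := fun t ht =>
    ⟨S.pos_of wb hεK h1 hf1 hp ht, S.lt_one wb hεK (h1.le.trans ht)⟩
  have hbd : ∀ t ∈ Ici t1, |g1 t * (2 * g2 t - derivWithin W (Icc 0 1) (g t))| ≤ C * (- g1 t * g t) := by
    intro t ht
    refine S.disc_bound (h1.trans_le ht) (S.fric h1 hκ ht) ?_ (S.gb wb hεK h1 hf1 ht)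
    nlinarith [(hmem t ht).1, (hmem t ht).2]
  have hκ0 : 0 ≤ κ * ε := le_trans (by have := S.n1; positivity) hκ
  have hC0 : 0 ≤ C := by
    have := S.ε0
    have := S.K0
    have := wb.M0
    have e : C = 2 * (κ * ε) * (M+2) + ε * K := by rw [hC]; ring
    rw [e]; positivity
  have hnn : ∀ t ∈ Ici t1, 0 ≤ C * (- g1 t * g t) := fun t ht => (abs_nonneg _).trans (hbd t ht)
  have hsq : ∀ k t, HasDerivAt (fun t => k * g t ^ 2) (k * (2 * g t * g1 t)) t := fun k t => by
    have := ((S.hg t).pow 2).const_mul k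
    refine this.congr_deriv ?_
    simp
  have hl := S.lim wb
  have hW0 : Tendsto (fun t => g1 t ^ 2 - W (g t)) atTop (nhds 0) := by
    have hB : Tendsto (fun t => ((M+2)^2 + M^2) * g t ^ 2) atTop (nhds 0) := by
      have := (hl.pow 2).const_mul ((M+2)^2 + M^2)
      simpa using this
    refine squeeze_zero_norm' ?_ hB
    filter_upwards [eventually_ge_atTop t1] with t ht
    have a1 := S.gb wb hεK h1 hf1 ht
    have a2 := S.neg t (h1.le.trans ht)
    have a3 : g1 t ^ 2 ≤ ((M+2) * g t)^2 := by
      rw [← neg_sq]; exact pow_le_pow_left₀ (by linarith) a1 2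
    have a4 := wb.up _ (S.mem t)
    have a5 := wb.nonneg _ (S.mem t)
    have a6 : √(W (g t)) ≤ M * g t := by
      have : g t * (1 - g t) ≤ g t := by nlinarith [(S.mem t).1, (S.mem t).2]
      nlinarith [wb.M0]
    have a7 : W (g t) ≤ (M * g t)^2 := by
      rw [← Real.sq_sqrt a5]; exact pow_le_pow_left₀ (Real.sqrt_nonneg _) a6 2
    rw [Real.norm_eq_abs, abs_le]
    constructor <;> nlinarith [sq_nonneg (g1 t)]
  have hG0 : Tendsto (fun t => C * g t ^ 2) atTop (nhds 0) := by
    simpa using (hl.pow 2).const_mul C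
  have hanti : AntitoneOn (fun t => (g1 t ^ 2 - W (g t)) + C * g t ^ 2) (Ici t1) := by
    refine anti_of_hasDeriv (convex_Ici t1)
      (fun t ht => (S.disc_deriv wb (hmem t ht)).add (hsq C t)) (fun t ht => ?_)
    have := (abs_le.1 (hbd t ht)).2
    have := hnn t ht
    nlinarith
  have hmono : MonotoneOn (fun t => (g1 t ^ 2 - W (g t)) - C * g t ^ 2) (Ici t1) := by
    refine mono_of_hasDeriv (convex_Ici t1)
      (fun t ht => (S.disc_deriv wb (hmem t ht)).sub (hsq C t)) (fun t ht => ?_)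
    have := (abs_le.1 (hbd t ht)).1
    have := hnn t ht
    nlinarith
  have l1 : 0 ≤ (g1 t ^ 2 - W (g t)) + C * g t ^ 2 := by
    have hlim : Tendsto (fun t => (g1 t ^ 2 - W (g t)) + C * g t ^ 2) atTop (nhds 0) := by
      simpa using hW0.add hG0
    refine le_of_tendsto hlim ?_
    filter_upwards [eventually_ge_atTop t] with s hs
    exact hanti ht (mem_Ici.2 (le_trans ht hs)) hs
  have l2 : (g1 t ^ 2 - W (g t)) - C * g t ^ 2 ≤ 0 := by
    have hlim : Tendsto (fun t => (g1 t ^ 2 - W (g t)) - C * g t ^ 2) atTop (nhds 0) := by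
      simpa using hW0.sub hG0
    refine ge_of_tendsto hlim ?_
    filter_upwards [eventually_ge_atTop t] with s hs
    exact hmono ht (mem_Ici.2 (le_trans ht hs)) hs
  rw [abs_le]
  constructor <;> linarith

lemma disc_left (wb : WB W m M c δ) (S : Sol n W K R ε g g1 g2 E) (hεK : ε * K ≤ 1) {t1 t κ : ℝ}
    (h1 : 0 < t1) (hκ : ((n:ℝ) - 1) / t1 ≤ κ * ε) (hκ1 : κ * ε ≤ 1) (hp : 0 < g t1)
    (ht : t1 ≤ t) : |g1 t ^ 2 - W (g t)| ≤ ((M+2)^2 + M^2) * (1 - g t1)^2 +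
      ε * (2 * κ * (M+2) + K) * (1 - g t) ^ 2 := by
  set C := ε * (2 * κ * (M+2) + K) with hC
  have hf1 := hκ.trans hκ1
  have hmem : ∀ t ∈ Ici t1, g t ∈ Ioo (0:ℝ) 1 := fun t ht =>
    ⟨S.pos_of wb hεK h1 hf1 hp ht, S.lt_one wb hεK (h1.le.trans ht)⟩
  have hbd : ∀ t ∈ Ici t1, |g1 t * (2 * g2 t - derivWithin W (Icc 0 1) (g t))| ≤
      C * (- g1 t * (1 - g t)) := by
    intro t ht
    refine S.disc_bound (h1.trans_le ht) (S.fric h1 hκ ht) ?_ (S.hb wb hεK (h1.le.trans ht))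
    nlinarith [(hmem t ht).1, (hmem t ht).2]
  have hκ0 : 0 ≤ κ * ε := le_trans (by have := S.n1; positivity) hκ
  have hC0 : 0 ≤ C := by
    have := S.ε0
    have := S.K0
    have := wb.M0
    have e : C = 2 * (κ * ε) * (M+2) + ε * K := by rw [hC]; ring
    rw [e]; positivity
  have hnn : ∀ t ∈ Ici t1, 0 ≤ C * (- g1 t * (1 - g t)) :=
    fun t ht => (abs_nonneg _).trans (hbd t ht)
  have hsq : ∀ k t, HasDerivAt (fun t => k * (1 - g t) ^ 2) (k * (2 * (1 - g t) * (- g1 t))) t :=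
    fun k t => by
      have := ((S.hder t).pow 2).const_mul k
      refine this.congr_deriv ?_
      simp
  have hD1 : |g1 t1 ^ 2 - W (g t1)| ≤ ((M+2)^2 + M^2) * (1 - g t1)^2 := by
    have a1 := S.hb wb hεK h1.le
    have a2 := S.neg t1 h1.le
    have a3 : g1 t1 ^ 2 ≤ ((M+2) * (1 - g t1))^2 := by
      rw [← neg_sq]; exact pow_le_pow_left₀ (by linarith) a1 2
    have a4 := wb.up _ (S.mem t1)
    have a5 := wb.nonneg _ (S.mem t1)
    have a6 : √(W (g t1)) ≤ M * (1 - g t1) := by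
      have : g t1 * (1 - g t1) ≤ 1 - g t1 := by nlinarith [(S.mem t1).1, (S.mem t1).2]
      nlinarith [wb.M0]
    have a7 : W (g t1) ≤ (M * (1 - g t1))^2 := by
      rw [← Real.sq_sqrt a5]; exact pow_le_pow_left₀ (Real.sqrt_nonneg _) a6 2
    rw [abs_le]
    constructor <;> nlinarith [sq_nonneg (g1 t1)]
  have hmono : MonotoneOn (fun t => (g1 t ^ 2 - W (g t)) + C * (1 - g t) ^ 2) (Ici t1) := by
    refine mono_of_hasDeriv (convex_Ici t1)
      (fun t ht => (S.disc_deriv wb (hmem t ht)).add (hsq C t)) (fun t ht => ?_)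
    have := (abs_le.1 (hbd t ht)).1
    have := hnn t ht
    nlinarith
  have hanti : AntitoneOn (fun t => (g1 t ^ 2 - W (g t)) - C * (1 - g t) ^ 2) (Ici t1) := by
    refine anti_of_hasDeriv (convex_Ici t1)
      (fun t ht => (S.disc_deriv wb (hmem t ht)).sub (hsq C t)) (fun t ht => ?_)
    have := (abs_le.1 (hbd t ht)).2
    have := hnn t ht
    nlinarith
  have l1 := hmono (mem_Ici.2 le_rfl) ht ht
  have l2 := hanti (mem_Ici.2 le_rfl) ht ht
  simp only at l1 l2
  have : 0 ≤ C * (1 - g t1)^2 := by positivity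
  rw [abs_le] at hD1 ⊢
  constructor <;> linarith [hD1.1, hD1.2]

lemma growth (wb : WB W m M c δ) (S : Sol n W K R ε g g1 g2 E) (hεK : ε * K ≤ 1)
    {t1 t2 t3 κ : ℝ} (h1 : 0 < t1) (hκ : ((n:ℝ) - 1) / t1 ≤ κ * ε)
    (hsmall : ε * (κ * (M+2) + K/2) ≤ c / 4) (h12 : t1 ≤ t2) (h23 : t2 ≤ t3)
    (hδ : 1 - δ ≤ g t3) : c / 8 * (t2 - t1)^2 * (1 - g t1) ≤ 1 - g t2 := by
  have hc := wb.c0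
  have hmono : ∀ t ∈ Icc t1 t2, 1 - g t1 ≤ 1 - g t := fun t ht => by
    linarith [S.anti (mem_Ici.2 h1.le) (mem_Ici.2 (h1.le.trans ht.1)) ht.1]
  have hconv : ∀ t ∈ Icc t1 t2, c / 4 * (1 - g t) ≤ - g2 t := by
    intro t ht
    have ht0 : 0 < t := h1.trans_le ht.1
    have hgt : 1 - δ ≤ g t := hδ.trans
      (S.anti (mem_Ici.2 ht0.le) (mem_Ici.2 (ht0.le.trans (ht.2.trans h23))) (ht.2.trans h23))
    have a1 := wb.near _ (S.mem t) hgt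
    have a2 := S.ode t ht0
    have a3 := S.hb wb hεK ht0.le
    have hng := S.neg t ht0.le
    have hf0 : 0 ≤ ((n:ℝ) - 1) / t := by
      have := S.n1
      positivity
    have a4 := S.fric h1 hκ ht.1
    have a5 : ((n:ℝ) - 1) / t * (- g1 t) ≤ κ * ε * ((M+2) * (1 - g t)) :=
      mul_le_mul a4 a3 (by linarith) (hf0.trans a4)
    have hε := S.ε0
    have hh : 0 ≤ 1 - g t := by linarith [(S.mem t).2]
    have hp : 0 ≤ g t * (1 - g t) := mul_nonneg (S.mem t).1 hh
    have a6 : |ε * g t * (1 - g t) * E t| ≤ ε * K * (1 - g t) := by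
      have : ε * g t * (1 - g t) * E t = ε * ((g t * (1 - g t)) * E t) := by ring
      rw [this, abs_mul, abs_of_pos hε, abs_mul, abs_of_nonneg hp, mul_assoc]
      have : g t * (1 - g t) * |E t| ≤ (1 - g t) * K :=
        mul_le_mul (by nlinarith [(S.mem t).2]) (S.hE t) (abs_nonneg _) hh
      nlinarith
    have a7 := (abs_le.1 a6).1
    have a8 := mul_le_mul_of_nonneg_right hsmall hh
    nlinarith
  have m1 : MonotoneOn (fun t => - g1 t - c / 4 * (1 - g t1) * (t - t1)) (Icc t1 t2) := by
    refine mono_of_hasDeriv (f' := fun t => - g2 t - c / 4 * (1 - g t1)) (convex_Icc _ _)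
      (fun t _ => ?_) (fun t ht => ?_)
    · simpa using! (S.hg1 t).neg.sub (((hasDerivAt_id t).sub_const t1).const_mul (c / 4 * (1 - g t1)))
    · have a1 := hconv t ht
      have a2 := hmono t ht
      nlinarith
  have h' : ∀ t ∈ Icc t1 t2, c / 4 * (1 - g t1) * (t - t1) ≤ - g1 t := by
    intro t ht
    have := m1 (left_mem_Icc.2 h12) ht ht.1
    simp only [sub_self, mul_zero] at this
    linarith [S.neg t1 h1.le]
  have m2 : MonotoneOn (fun t => (1 - g t) - c / 8 * (1 - g t1) * (t - t1)^2) (Icc t1 t2) := by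
    refine mono_of_hasDeriv (f' := fun t => - g1 t - c / 8 * (1 - g t1) * (2 * (t - t1)))
      (convex_Icc _ _) (fun t _ => ?_) (fun t ht => ?_)
    · have := (S.hder t).sub ((((hasDerivAt_id t).sub_const t1).pow 2).const_mul (c / 8 * (1 - g t1)))
      refine this.congr_deriv ?_
      simp
    · linarith [h' t ht]
  have := m2 (left_mem_Icc.2 h12) (right_mem_Icc.2 h12) h12
  simp only [sub_self] at this
  have h0 : 0 ≤ 1 - g t1 := by linarith [(S.mem t1).2]
  nlinarith

end Sol


lemma ev_small (A : ℝ) {b : ℝ} (hb : 0 < b) : ∀ᶠ ε in nhdsWithin (0:ℝ) (Ioi 0), ε * A ≤ b := by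
  have : Tendsto (fun ε : ℝ => ε * A) (nhdsWithin (0:ℝ) (Ioi 0)) (nhds 0) := by
    have h : Continuous (fun ε : ℝ => ε * A) := by fun_prop
    have := h.tendsto 0
    simp only [zero_mul] at this
    exact this.mono_left nhdsWithin_le_nhds
  filter_upwards [this.eventually (gt_mem_nhds hb)] with ε h using le_of_lt h

lemma ev_pos : ∀ᶠ ε in nhdsWithin (0:ℝ) (Ioi 0), 0 < ε := self_mem_nhdsWithin

lemma ev_big {R : ℝ} (hR : 0 < R) (N : ℝ) : ∀ᶠ ε in nhdsWithin (0:ℝ) (Ioi 0), N ≤ R / ε := by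
  filter_upwards [ev_small N hR, ev_pos] with ε h h0
  rw [le_div_iff₀ h0]; linarith

section
variable {n : ℕ} {W : ℝ → ℝ} {K R m M c δ : ℝ}

lemma tail_contra (hW : DoubleWell W) (wb : WB W m M c δ) (hn : 2 ≤ n) (hR : 0 < R) {b : ℝ}
    (hb : 0 < b) : ∀ᶠ ε in nhdsWithin (0:ℝ) (Ioi 0), ∀ g g1 g2 E : ℝ → ℝ,
      Sol n W K R ε g g1 g2 E → ¬ (∀ t ≥ R / ε / 2, g t ≤ Real.exp (-b * (t - R / ε / 2))) := by
  obtain ⟨C, hC, hv⟩ := vol_upper (n-1) hb (B := 2 * M) (by linarith [wb.M0])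
  filter_upwards [ev_pos, ev_big hR (2 * (C * n + 1))] with ε h0 hbig g g1 g2 E S hcon
  set T := R / ε / 2 with hT
  have hCn : 0 < C * n := by have : (0:ℝ) < n := by exact_mod_cast (by omega : 0 < n)
                             positivity
  have hT1 : C * n + 1 ≤ T := by rw [hT]; linarith
  have h := hv T (by linarith) _ S.vol_int (fun t ht => by
    by_cases htT : t ≤ T
    · rw [indicator_of_mem (mem_Iic.2 htT)]
      have := V_le_one (n := n) hn hW wb (S.mem t)
      have := wb.M0
      have : 0 ≤ 2 * M * Real.exp (-b * |t - T|) := by positivity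
      linarith
    · push Not at htT
      rw [indicator_of_notMem (by simp; exact htT), zero_add, abs_of_pos (by linarith)]
      have h1 := V_le (n := n) hn hW wb (S.mem t)
      have := wb.M0
      have h2 := hcon t htT.le
      nlinarith)
  rw [S.vol] at h
  obtain ⟨k, rfl⟩ : ∃ k, n = k + 1 := ⟨n - 1, by omega⟩
  have e : R / ε = 2 * T := by rw [hT]; ring
  simp only [Nat.add_sub_cancel] at h
  rw [e] at h
  push_cast at h hT1 hCn
  have hTp : 0 < T := by linarith
  have h2 : 2 * T ^ (k+1) ≤ (2 * T) ^ (k+1) := by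
    rw [mul_pow]
    have : (2:ℝ) ≤ 2 ^ (k+1) := by
      rw [pow_succ]; have : (1:ℝ) ≤ 2 ^ k := one_le_pow₀ (by norm_num)
      linarith
    have := pow_pos hTp (k+1)
    nlinarith
  have hk : (0:ℝ) < k + 1 := by positivity
  have h3 : T ^ (k+1) ≤ C * (k+1) * T ^ k := by
    have : (2 * T) ^ (k+1) / ((k:ℝ)+1) * (k+1) ≤ (T ^ (k+1) / ((k:ℝ)+1) + C * T^k) * (k+1) :=
      mul_le_mul_of_nonneg_right h hk.le
    rw [add_mul, div_mul_cancel₀ _ hk.ne', div_mul_cancel₀ _ hk.ne'] at this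
    nlinarith
  rw [pow_succ] at h3
  have := pow_pos hTp k
  nlinarith

lemma loc_pos (hW : DoubleWell W) (wb : WB W m M c δ) (hn : 2 ≤ n) (hR : 0 < R) :
    ∀ᶠ ε in nhdsWithin (0:ℝ) (Ioi 0), ∀ g g1 g2 E : ℝ → ℝ,
      Sol n W K R ε g g1 g2 E → 0 < g (R / ε / 8) := by
  filter_upwards [ev_pos, tail_contra (K := K) hW wb hn hR one_pos] with ε h0 ht g g1 g2 E S
  by_contra hcon
  push Not at hcon
  refine ht g g1 g2 E S fun t h => ?_
  have ha : 0 < R / ε := by positivity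
  have : g t ≤ g (R / ε / 8) := S.anti (mem_Ici.2 (by linarith)) (mem_Ici.2 (by linarith)) (by linarith)
  exact (this.trans hcon).trans (Real.exp_pos _).le

lemma loc_mid (hW : DoubleWell W) (wb : WB W m M c δ) (hn : 2 ≤ n) (hR : 0 < R) (hK : 0 < K) :
    ∀ᶠ ε in nhdsWithin (0:ℝ) (Ioi 0), ∀ g g1 g2 E : ℝ → ℝ,
      Sol n W K R ε g g1 g2 E → 1 - δ ≤ g (R / ε / 2) := by
  have hm := wb.m0
  have hM := wb.M0
  have hδ := wb.δ0
  set κ := 8 * ((n:ℝ) - 1) / R with hκ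
  filter_upwards [ev_pos, loc_pos (K := K) hW wb hn hR,
    tail_contra (K := K) hW wb hn hR (b := m * δ / 2) (by positivity), ev_small K one_pos,
    ev_small κ one_pos, ev_small (2 * κ * (M+2) + K) (b := m^2*δ^2/2) (by positivity)]
    with ε h0 hpos ht hεK hκ1 hsm g g1 g2 E S
  have hp := hpos g g1 g2 E S
  by_contra hcon
  push Not at hcon
  have ha : 0 < R / ε := by positivity
  refine ht g g1 g2 E S ?_
  set T := R / ε / 2
  have ht1 : 0 < R / ε / 8 := by positivity
  have hκ' : ((n:ℝ) - 1) / (R / ε / 8) ≤ κ * ε := by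
    rw [hκ]; apply le_of_eq; field_simp
  have hTt : R / ε / 8 ≤ T := by simp only [T]; linarith
  have hder : ∀ t ∈ Ici T, g1 t ≤ - (m * δ / 2) * g t := by
    intro t ht
    have ht' : T ≤ t := ht
    have h1 := S.disc_right wb hεK ht1 hκ' (by linarith) hp (hTt.trans ht)
    have hgt : g t ≤ g T := S.anti (mem_Ici.2 (by linarith)) (mem_Ici.2 (by linarith)) ht
    have h2 := wb.low _ (S.mem t)
    have hg0 := (S.mem t).1
    have h3 : m * δ * g t ≤ √(W (g t)) := by
      refine le_trans ?_ h2
      have : g t * δ ≤ g t * (1 - g t) := mul_le_mul_of_nonneg_left (by linarith) hg0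
      nlinarith
    have h4 : (m * δ * g t)^2 ≤ W (g t) := by
      calc _ ≤ √(W (g t)) ^ 2 := by gcongr
        _ = _ := Real.sq_sqrt (wb.nonneg _ (S.mem t))
    have h5 := (abs_le.1 h1).1
    have h6 : (m * δ / 2 * g t)^2 ≤ (- g1 t)^2 := by
      have : ε * (2 * κ * (M+2) + K) * g t ^ 2 ≤ m^2*δ^2/2 * g t ^ 2 := by gcongr
      nlinarith [sq_nonneg (m * δ * g t)]
    have h7 := abs_le_of_sq_le_sq h6 (by linarith [S.neg t (by linarith)])
    linarith [(abs_le.1 h7).2]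
  have hanti : AntitoneOn (fun t => g t * Real.exp (m * δ / 2 * t)) (Ici T) := by
    refine anti_of_hasDeriv (f' := fun t => g1 t * Real.exp (m * δ / 2 * t) +
      g t * (Real.exp (m * δ / 2 * t) * (m * δ / 2))) (convex_Ici T) (fun t _ => ?_) ?_
    · have h2 : HasDerivAt (fun t => Real.exp (m * δ / 2 * t))
          (Real.exp (m * δ / 2 * t) * (m * δ / 2)) t := by
        simpa using ((hasDerivAt_id t).const_mul (m * δ / 2)).exp
      exact (S.hg t).mul h2
    · intro t ht
      have := hder t ht
      have he := Real.exp_pos (m * δ / 2 * t)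
      nlinarith
  intro t ht
  have h := hanti (mem_Ici.2 le_rfl) (mem_Ici.2 ht) ht
  simp only at h
  have e : Real.exp (-(m * δ / 2) * (t - T)) =
      Real.exp (m * δ / 2 * T) / Real.exp (m * δ / 2 * t) := by
    rw [← Real.exp_sub]; congr 1; ring
  rw [e, le_div_iff₀ (Real.exp_pos _)]
  refine h.trans ?_
  have := (S.mem T).2
  have := Real.exp_pos (m * δ / 2 * T)
  nlinarith

lemma min_aux {x : ℝ} (hx : 0 ≤ x) (hx1 : 0 ≤ 1 - x) :
    x ^ 2 ≤ 4 * (x * (1 - x))^2 ∨ (1 - x) ^ 2 ≤ 4 * (x * (1 - x))^2 := by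
  rcases le_total x (1/2) with hh | hh
  · left
    have : x ≤ 2 * (x * (1 - x)) := by nlinarith
    calc x ^ 2 ≤ (2 * (x * (1 - x)))^2 := by gcongr
      _ = _ := by ring
  · right
    have : (1 - x) ≤ 2 * (x * (1 - x)) := by nlinarith
    calc (1 - x) ^ 2 ≤ (2 * (x * (1 - x)))^2 := by gcongr
      _ = _ := by ring

/-- The discrepancy estimate in the transition region. -/
lemma disc_main (hW : DoubleWell W) (wb : WB W m M c δ) (hn : 2 ≤ n) (hR : 0 < R) (hK : 0 < K) :
    ∃ C > 0, ∀ᶠ ε in nhdsWithin (0:ℝ) (Ioi 0), ∀ g g1 g2 E : ℝ → ℝ,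
      Sol n W K R ε g g1 g2 E → ∀ t ≥ R / ε / 4, g t ∈ Ioo (0:ℝ) 1 ∧
        |g1 t ^ 2 - W (g t)| ≤ C * ε * W (g t) := by
  have hm := wb.m0
  have hM := wb.M0
  have hc := wb.c0
  have hn1 : (0:ℝ) < (n:ℝ) - 1 := by
    have : (2:ℝ) ≤ n := by exact_mod_cast hn
    linarith
  set κ := 8 * ((n:ℝ) - 1) / R with hκ
  have hκ0 : 0 < κ := by positivity
  set Q := 512 / (c * R^2) with hQ
  have hQ0 : 0 < Q := by positivity
  set C1 := 2 * κ * (M+2) + K with hC1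
  have hC10 : 0 < C1 := by positivity
  set C4 := ((M+2)^2 + M^2) * Q^2 + C1 with hC4
  have hC40 : 0 < C4 := by positivity
  refine ⟨4 * C4 / m^2, by positivity, ?_⟩
  filter_upwards [ev_pos, loc_pos (K := K) hW wb hn hR, loc_mid hW wb hn hR hK, ev_small K one_pos,
    ev_small κ one_pos, ev_small (κ * (M+2) + K/2) (b := c / 4) (by positivity), ev_small 1 one_pos]
    with ε h0 hpos hmid hεK hκ1 hsm hε1 g g1 g2 E S t ht
  have hp := hpos g g1 g2 E S
  have hmd := hmid g g1 g2 E S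
  have ha : 0 < R / ε := by positivity
  have ht1 : 0 < R / ε / 8 := by positivity
  have hκ' : ((n:ℝ) - 1) / (R / ε / 8) ≤ κ * ε := by
    rw [hκ]; apply le_of_eq; field_simp
  have hκ1' : κ * ε ≤ 1 := by linarith
  have htt : R / ε / 8 ≤ t := by linarith
  have hg0 := S.pos_of wb hεK ht1 (hκ'.trans hκ1') hp htt
  have hg1 := S.lt_one wb hεK (t := t) (by linarith)
  refine ⟨⟨hg0, hg1⟩, ?_⟩
  have hgr := S.growth wb hεK ht1 hκ' hsm (t2 := R/ε/4) (by linarith) (by linarith) hmd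
  have hmono : g t ≤ g (R/ε/4) := S.anti (mem_Ici.2 (by linarith)) (mem_Ici.2 (by linarith)) ht
  have h1 : 1 - g (R/ε/8) ≤ Q * ε^2 * (1 - g t) := by
    have e : c / 8 * (R/ε/4 - R/ε/8)^2 = 1 / (Q * ε^2) := by
      rw [hQ]; field_simp; norm_num
    rw [e, div_mul_eq_mul_div, one_mul, div_le_iff₀ (by positivity)] at hgr
    have : (1 - g (R/ε/4)) * (Q * ε^2) ≤ (1 - g t) * (Q * ε^2) := by gcongr
    linarith
  have hL := S.disc_left wb hεK ht1 hκ' hκ1' hp htt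
  have hRt := S.disc_right wb hεK ht1 hκ' hκ1' hp htt
  have hh0 : 0 < 1 - g t := by linarith
  have hL' : |g1 t ^ 2 - W (g t)| ≤ ε * C4 * (1 - g t)^2 := by
    refine hL.trans ?_
    have h2 : (1 - g (R/ε/8))^2 ≤ (Q * ε^2 * (1 - g t))^2 := by
      have := (S.mem (R/ε/8)).2
      gcongr
    have h3 : (Q * ε^2 * (1 - g t))^2 ≤ ε * Q^2 * (1 - g t)^2 := by
      have : ε^4 ≤ ε := by
        have : ε ^ 3 ≤ 1 := pow_le_one₀ h0.le (by linarith)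
        nlinarith
      have h9 : ε^4 * (Q^2 * (1 - g t)^2) ≤ ε * (Q^2 * (1 - g t)^2) :=
        mul_le_mul_of_nonneg_right this (by positivity)
      calc _ = ε^4 * (Q^2 * (1 - g t)^2) := by ring
        _ ≤ _ := h9
        _ = _ := by ring
    have h4 : ((M+2)^2 + M^2) * (1 - g (R/ε/8))^2 ≤ ((M+2)^2 + M^2) * (ε * Q^2 * (1 - g t)^2) :=
      mul_le_mul_of_nonneg_left (h2.trans h3) (by positivity)
    calc _ ≤ ((M+2)^2 + M^2) * (ε * Q^2 * (1 - g t)^2) + ε * C1 * (1 - g t)^2 :=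
          add_le_add_left h4 _
      _ = _ := by rw [hC4]; ring
  have hR' : |g1 t ^ 2 - W (g t)| ≤ ε * C4 * (g t)^2 := by
    refine hRt.trans ?_
    have : C1 ≤ C4 := by rw [hC4]; have : 0 ≤ ((M+2)^2 + M^2) * Q^2 := by positivity
                         linarith
    gcongr
  have h5 : |g1 t ^ 2 - W (g t)| ≤ ε * C4 * (4 * (g t * (1 - g t))^2) := by
    have hεC : 0 ≤ ε * C4 := by positivity
    rcases min_aux hg0.le hh0.le with hh | hh
    · exact hR'.trans (mul_le_mul_of_nonneg_left hh hεC)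
    · exact hL'.trans (mul_le_mul_of_nonneg_left hh hεC)
  have h6 : m^2 * (g t * (1 - g t))^2 ≤ W (g t) := by
    have := wb.low _ (S.mem t)
    calc _ = (m * (g t * (1 - g t)))^2 := by ring
      _ ≤ √(W (g t)) ^ 2 := by gcongr
      _ = _ := Real.sq_sqrt (wb.nonneg _ (S.mem t))
  refine h5.trans ?_
  have h7 : (g t * (1 - g t))^2 ≤ W (g t) / m^2 := by
    rw [le_div_iff₀ (by positivity)]; linarith
  calc ε * C4 * (4 * (g t * (1 - g t))^2) ≤ ε * C4 * (4 * (W (g t) / m^2)) := by gcongr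
    _ = _ := by ring

/-- The rescaled position `θ = H ∘ g` is almost a translation. -/
lemma theta_main (hW : DoubleWell W) (wb : WB W m M c δ) (hn : 2 ≤ n) (hR : 0 < R) (hK : 0 < K)
    {η : ℝ → ℝ} (hη : TransitionProfile W η) :
    ∃ C > 0, ∀ᶠ ε in nhdsWithin (0:ℝ) (Ioi 0), ∀ g g1 g2 E : ℝ → ℝ,
      Sol n W K R ε g g1 g2 E → ∃ θ : ℝ → ℝ, (∀ t ≥ R / ε / 4, η (θ t) = g t) ∧
        ∀ t ≥ R / ε / 4, ∀ t' ≥ R / ε / 4, |θ t - θ t' - (t - t')| ≤ C * ε * |t - t'| := by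
  obtain ⟨C, hC, hmain⟩ := disc_main hW wb hn hR hK
  refine ⟨C, hC, ?_⟩
  filter_upwards [ev_pos, hmain] with ε h0 hmain g g1 g2 E S
  have hd := hmain g g1 g2 E S
  have ha : 0 < R / ε := by positivity
  refine ⟨fun t => Hinv W (g t), fun t ht => eta_Hinv wb hη (hd t ht).1, ?_⟩
  have hder : ∀ t ≥ R / ε / 4, HasDerivAt (fun t => Hinv W (g t) - t)
      (-(√(W (g t)))⁻¹ * g1 t - 1) t := fun t ht =>
    ((Hinv_deriv wb (hd t ht).1).comp t (S.hg t)).sub (hasDerivAt_id t)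
  have hbd : ∀ t ≥ R / ε / 4, |(-(√(W (g t)))⁻¹ * g1 t - 1)| ≤ C * ε := by
    intro t ht
    obtain ⟨hgt, hD⟩ := hd t ht
    have hWp := wb.pos _ hgt
    have hs := Real.sqrt_pos.2 hWp
    have hsq := Real.sq_sqrt hWp.le
    set s := √(W (g t))
    set q := -(s)⁻¹ * g1 t with hq
    have hq0 : 0 ≤ q := by
      have := S.neg t (by linarith)
      have : 0 < s⁻¹ := by positivity
      rw [hq]; nlinarith
    have hp : g1 t = - q * s := by rw [hq]; field_simp
    rw [hp, ← hsq] at hD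
    have e : (-q * s)^2 - s^2 = (q - 1) * ((q + 1) * s^2) := by ring
    rw [e, abs_mul, abs_of_pos (a := (q+1) * s^2) (by positivity)] at hD
    have h1 : |q - 1| * s^2 ≤ C * ε * s^2 := by
      refine le_trans ?_ hD
      have : s^2 ≤ (q+1) * s^2 := by nlinarith [sq_nonneg s]
      gcongr
    exact le_of_mul_le_mul_right h1 (by positivity)
  intro t ht t' ht'
  have := (convex_Ici (R/ε/4)).norm_image_sub_le_of_norm_hasDerivWithin_le
    (f := fun t => Hinv W (g t) - t) (f' := fun t => -(√(W (g t)))⁻¹ * g1 t - 1) (C := C * ε)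
    (fun x hx => (hder x hx).hasDerivWithinAt) (fun x hx => hbd x hx) (mem_Ici.2 ht') (mem_Ici.2 ht)
  rw [Real.norm_eq_abs, Real.norm_eq_abs] at this
  convert this using 2
  ring

end


section
variable {n : ℕ} {W : ℝ → ℝ} {K R m M c δ : ℝ} {η : ℝ → ℝ}

lemma F_upper (hn : 2 ≤ n) (hW : DoubleWell W) (wb : WB W m M c δ) (hη : TransitionProfile W η)
    (t T : ℝ) : Vpot n W (η (t - T)) ≤
      (Iic T).indicator (fun _ => (1:ℝ)) t + 2 * M * Real.exp (-m * |t - T|) := by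
  have hM := wb.M0
  by_cases htT : t ≤ T
  · rw [indicator_of_mem (mem_Iic.2 htT)]
    have := V_le_one (n := n) hn hW wb (eta_mem hη (t - T))
    have : 0 ≤ 2 * M * Real.exp (-m * |t - T|) := by positivity
    linarith
  · push Not at htT
    rw [indicator_of_notMem (by simp; exact htT), zero_add, abs_of_pos (by linarith)]
    have h1 := V_le (n := n) hn hW wb (eta_mem hη (t - T))
    have h2 := eta_right wb hη (y := t - T) (by linarith)
    nlinarith

lemma F_left (hn : 2 ≤ n) (hW : DoubleWell W) (wb : WB W m M c δ) (hη : TransitionProfile W η)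
    {y : ℝ} (hy : y ≤ 0) : 1 - 2 * M * Real.exp (m * y) ≤ Vpot n W (η y) := by
  have hM := wb.M0
  have h1 := V_ge (n := n) hn hW wb (eta_mem hη y)
  have h2 := eta_left wb hη hy
  nlinarith

lemma F_lower (hn : 2 ≤ n) (hW : DoubleWell W) (wb : WB W m M c δ) (hη : TransitionProfile W η)
    (t T : ℝ) : (Iic T).indicator (fun _ => (1:ℝ)) t - 2 * M * Real.exp (-m * |t - T|) ≤
      Vpot n W (η (t - T)) := by
  have hM := wb.M0
  by_cases htT : t ≤ T
  · rw [indicator_of_mem (mem_Iic.2 htT)]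
    have := F_left hn hW wb hη (y := t - T) (by linarith)
    rw [abs_of_nonpos (by linarith)]
    convert this using 4
    ring
  · push Not at htT
    rw [indicator_of_notMem (by simp; exact htT), zero_sub]
    have h1 := V_nonneg (n := n) wb (eta_mem hη (t - T))
    have : 0 ≤ 2 * M * Real.exp (-m * |t - T|) := by positivity
    linarith

lemma loc_profile (hn : 2 ≤ n) (hW : DoubleWell W) (wb : WB W m M c δ) (hR : 0 < R)
    (hη : TransitionProfile W η) :
    ∃ C > 0, ∀ᶠ ε in nhdsWithin (0:ℝ) (Ioi 0), ∀ T : ℝ,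
      IntegrableOn (fun t => t ^ (n-1) * Vpot n W (η (t - T))) (Ioi 0) →
      ∫ t in Ioi (0:ℝ), t ^ (n-1) * Vpot n W (η (t - T)) = (R / ε) ^ n / n →
      |T - R / ε| ≤ C := by
  have hM := wb.M0
  obtain ⟨Cu, hCu, hu⟩ := vol_upper (n-1) wb.m0 (B := 2 * M) (by linarith)
  obtain ⟨Cl, hCl, hl⟩ := vol_lower (n-1) wb.m0 (B := 2 * M) (by linarith)
  obtain ⟨k, rfl⟩ : ∃ k, n = k + 1 := ⟨n - 1, by omega⟩
  simp only [Nat.add_sub_cancel] at hu hl ⊢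
  push_cast
  have hk : (0:ℝ) < k + 1 := by positivity
  refine ⟨((k:ℝ)+1) * (Cu + Cl), by positivity, ?_⟩
  filter_upwards [ev_pos, ev_big hR (2 + (k+1) * Cu)] with ε h0 hbig T hI hv
  set a := R / ε
  have hkC : 0 < (k+1) * Cu := by positivity
  have ha : 1 ≤ a := by linarith
  rcases lt_or_ge T 1 with hT | hT
  · exfalso
    have h1 := hu 1 le_rfl (fun t => Vpot (k+1) W (η (t - T))) hI (fun t ht => by
      refine le_trans ?_ (F_upper hn hW wb hη t 1)
      refine V_mono hn wb (eta_mem hη _).1 (hη.anti.antitone (by linarith)) (eta_mem hη _).2)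
    rw [hv, one_pow, one_pow, mul_one, ← mul_le_mul_iff_left₀ hk, add_mul,
      div_mul_cancel₀ _ hk.ne', div_mul_cancel₀ _ hk.ne'] at h1
    have h2 : a ≤ a ^ (k+1) := le_self_pow₀ ha (by omega)
    linarith
  · have h1 := hu T hT (fun t => Vpot (k+1) W (η (t - T))) hI (fun t _ => F_upper hn hW wb hη t T)
    have h2 := hl T hT (fun t => Vpot (k+1) W (η (t - T))) hI (fun t _ => F_lower hn hW wb hη t T)
    rw [hv, ← mul_le_mul_iff_left₀ hk, add_mul,
      div_mul_cancel₀ _ hk.ne', div_mul_cancel₀ _ hk.ne'] at h1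
    rw [hv, ← mul_le_mul_iff_left₀ hk, sub_mul,
      div_mul_cancel₀ _ hk.ne', div_mul_cancel₀ _ hk.ne'] at h2
    have hTk : 0 < T ^ k := by positivity
    have hu' : (a - T) ≤ (k+1) * (Cu + Cl) := by
      by_cases h : a ≤ T
      · have : 0 < (k+1) * (Cu + Cl) := by positivity
        linarith
      push Not at h
      have h3 : T ^ k * a ≤ a ^ (k+1) := by rw [pow_succ]; gcongr
      have h4 : T ^ k * (a - T) ≤ T^k * ((k+1) * Cu) := by
        have : T^(k+1) = T^k * T := pow_succ _ _
        linarith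
      have := le_of_mul_le_mul_left h4 hTk
      nlinarith
    have hl' : (T - a) ≤ (k+1) * (Cu + Cl) := by
      by_cases h : T ≤ a
      · have : 0 < (k+1) * (Cu + Cl) := by positivity
        linarith
      push Not at h
      have h3 : a ^ (k+1) ≤ T ^ k * a := by rw [pow_succ]; gcongr
      have h4 : T ^ k * (T - a) ≤ T^k * ((k+1) * Cl) := by
        have : T^(k+1) = T^k * T := pow_succ _ _
        linarith
      have := le_of_mul_le_mul_left h4 hTk
      nlinarith
    rw [abs_le]; constructor <;> linarith
end


lemma exp_neg_small {x : ℝ} (hx : 0 < x) : Real.exp (-x) ≤ 1 / x := by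
  rw [Real.exp_neg, ← one_div]
  have := Real.add_one_le_exp x
  gcongr
  linarith

lemma mul_exp_le {b x : ℝ} (hb : 0 < b) :
    x * Real.exp (-b * x) ≤ 2 / b * Real.exp (-(b/2) * x) := by
  have h1 : x ≤ 2 / b * Real.exp (b / 2 * x) := by
    have := Real.add_one_le_exp (b / 2 * x)
    rw [div_mul_eq_mul_div, le_div_iff₀ hb]
    linarith
  have e : Real.exp (-(b/2) * x) = Real.exp (b / 2 * x) * Real.exp (-b * x) := by
    rw [← Real.exp_add]; congr 1; ring
  rw [e, ← mul_assoc]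
  exact mul_le_mul_of_nonneg_right h1 (Real.exp_pos _).le

section
variable {n : ℕ} {W : ℝ → ℝ} {K R m M c δ : ℝ} {η : ℝ → ℝ}

lemma F_anti (hn : 2 ≤ n) (wb : WB W m M c δ) (hη : TransitionProfile W η) {a b : ℝ} (h : a ≤ b) :
    Vpot n W (η b) ≤ Vpot n W (η a) :=
  V_mono hn wb (eta_mem hη _).1 (hη.anti.antitone h) (eta_mem hη _).2

lemma F_lip (hn : 2 ≤ n) (hW : DoubleWell W) (wb : WB W m M c δ) (hη : TransitionProfile W η)
    {a b ℓ : ℝ} (hab : a ≤ b)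
    (hℓ : ∀ z ∈ Icc a b, ℓ ≤ |z|) :
    Vpot n W (η a) - Vpot n W (η b) ≤ 2 * M * (M * Real.exp (-m * ℓ) * (b - a)) := by
  have hM := wb.M0
  refine (V_lip hn hW wb (eta_mem hη _).1 (hη.anti.antitone hab) (eta_mem hη _).2).trans ?_
  have := eta_lip wb hη hab hℓ
  gcongr

lemma abs_half {y z κ : ℝ} (hκ0 : 0 ≤ κ) (hκ : κ ≤ 1/2) (h1 : y - κ * |y| ≤ z)
    (h2 : z ≤ y + κ * |y|) : |y| / 2 ≤ |z| := by
  have hy := abs_nonneg y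
  have : κ * |y| ≤ 1/2 * |y| := by gcongr
  rcases abs_cases y with h | h <;> rcases abs_cases z with h' | h' <;> linarith

/-- Error term coming from the wiggling of `θ`. -/
lemma wiggle (hn : 2 ≤ n) (hW : DoubleWell W) (wb : WB W m M c δ) (hη : TransitionProfile W η)
    {y κ a b : ℝ} (hκ0 : 0 ≤ κ) (hκ : κ ≤ 1/2) (h1 : y - κ * |y| ≤ a) (hab : a ≤ b)
    (h2 : b ≤ y + κ * |y|) (h3 : b - a ≤ κ * |y|) :
    Vpot n W (η a) - Vpot n W (η b) ≤ 2 * M^2 * (4 / m) * κ * Real.exp (-(m/32) * |y|) := by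
  have hM := wb.M0
  have hm := wb.m0
  refine (F_lip hn hW wb hη (ℓ := |y|/2) hab (fun z hz => abs_half hκ0 hκ (h1.trans hz.1)
    (hz.2.trans h2))).trans ?_
  have h4 := mul_exp_le (b := m/2) (x := |y|) (by positivity)
  have h5 : Real.exp (-(m/2/2) * |y|) ≤ Real.exp (-(m/32) * |y|) := by
    apply Real.exp_le_exp.2
    have := abs_nonneg y
    nlinarith
  have h6 : Real.exp (-m * (|y|/2)) = Real.exp (-(m/2) * |y|) := by congr 1; ring
  rw [h6]
  calc 2 * M * (M * Real.exp (-(m/2) * |y|) * (b - a))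
      ≤ 2 * M * (M * Real.exp (-(m/2) * |y|) * (κ * |y|)) := by gcongr
    _ = 2 * M^2 * κ * (|y| * Real.exp (-(m/2) * |y|)) := by ring
    _ ≤ 2 * M^2 * κ * (2 / (m/2) * Real.exp (-(m/32) * |y|)) := by
        refine mul_le_mul_of_nonneg_left ?_ (by positivity)
        exact h4.trans (mul_le_mul_of_nonneg_left h5 (by positivity))
    _ = _ := by ring

lemma exp_far {a ε R m : ℝ} (hε : 0 < ε) (hR : 0 < R) (hm : 0 < m) (ha : a = R / ε) {y : ℝ}
    (hy : |y| ≤ 2 * a) :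
    Real.exp (-(m * a / 8)) ≤ 16 / (m * R) * ε * Real.exp (-(m/32) * |y|) := by
  have h1 : Real.exp (-(m * a / 16)) ≤ 16 / (m * R) * ε := by
    have h := exp_neg_small (x := m * a / 16) (by rw [ha]; positivity)
    refine h.trans (le_of_eq ?_)
    rw [ha]; field_simp
  have h2 : Real.exp (-(m * a / 16)) ≤ Real.exp (-(m/32) * |y|) := by
    apply Real.exp_le_exp.2; nlinarith
  calc Real.exp (-(m * a / 8)) = Real.exp (-(m * a / 16)) * Real.exp (-(m * a / 16)) := by
        rw [← Real.exp_add]; congr 1; ring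
    _ ≤ _ := by gcongr

set_option maxHeartbeats 1000000 in
lemma theta_zero (hn : 2 ≤ n) (hW : DoubleWell W) (wb : WB W m M c δ) (hR : 0 < R)
    (hη : TransitionProfile W η) {C3 C5 : ℝ} (hC3 : 0 < C3) (hC5 : 0 < C5) :
    ∃ C > 0, ∀ᶠ ε in nhdsWithin (0:ℝ) (Ioi 0), ∀ g g1 g2 E : ℝ → ℝ,
      Sol n W K R ε g g1 g2 E → ∀ θ : ℝ → ℝ, (∀ t ≥ R / ε / 4, η (θ t) = g t) →
      (∀ t ≥ R / ε / 4, ∀ t' ≥ R / ε / 4, |θ t - θ t' - (t - t')| ≤ C3 * ε * |t - t'|) →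
      ∀ T : ℝ,
      IntegrableOn (fun t => t ^ (n-1) * Vpot n W (η (t - T))) (Ioi 0) →
      ∫ t in Ioi (0:ℝ), t ^ (n-1) * Vpot n W (η (t - T)) = (R / ε) ^ n / n →
      |T - R / ε| ≤ C5 → |θ T| ≤ C * ε := by
  have hM := wb.M0
  have hm := wb.m0
  obtain ⟨c0, hc0, hdrop⟩ := F_drop hn wb hη
  set D := 2 * M^2 * (4 / m) * C3 + 2 * M * (16 / (m * R)) with hD
  have hD0 : 0 < D := by positivity
  have hDa : 2 * M^2 * (4 / m) * C3 ≤ D := by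
    have : 0 < 2 * M * (16 / (m * R)) := by positivity
    linarith
  have hDb : 2 * M * (16 / (m * R)) ≤ D := by
    have : 0 < 2 * M^2 * (4 / m) * C3 := by positivity
    linarith
  obtain ⟨C2, hC2, hkey⟩ := key_vol (n-1) (c1 := m/32) (c0 := c0) (C1 := D) (by positivity) hc0 hD0
  refine ⟨C2 + C3, by positivity, ?_⟩
  filter_upwards [ev_pos, ev_small C3 (b := 1/2) (by norm_num), ev_big hR (8 + 4 * C5),
    ev_small (C2 + C3) (b := 1/2) (by norm_num)]
    with ε h0 hκ hbig hsm g g1 g2 E S θ hθ hlip T hI hv hT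
  set a := R / ε with ha
  set κ := C3 * ε with hκd
  have hκ0 : 0 ≤ κ := by positivity
  have hκ1 : κ ≤ 1/2 := by linarith
  obtain ⟨hT1, hT2⟩ := abs_le.1 hT
  have hTlo : 3 * a / 4 + 2 ≤ T := by linarith
  have hThi : T ≤ 2 * a := by linarith
  have ha0 : 0 < a := by positivity
  have hTa : a / 4 ≤ T := by linarith
  have hθT : ∀ t ≥ a / 4, |θ t - θ T - (t - T)| ≤ κ * |t - T| := fun t ht => hlip t ht T hTa
  have hq0 : IntegrableOn (fun t => t ^ (n-1) * (Vpot n W (η (t - T)) - Vpot n W (g t))) (Ioi 0) ∧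
      ∫ t in Ioi (0:ℝ), t ^ (n-1) * (Vpot n W (η (t - T)) - Vpot n W (g t)) = 0 := by
    simp only [mul_sub]
    exact ⟨hI.sub S.vol_int, by rw [integral_sub hI S.vol_int, hv, S.vol, sub_self]⟩
  have hq0' : IntegrableOn (fun t => t ^ (n-1) * (Vpot n W (g t) - Vpot n W (η (t - T)))) (Ioi 0) ∧
      ∫ t in Ioi (0:ℝ), t ^ (n-1) * (Vpot n W (g t) - Vpot n W (η (t - T))) = 0 := by
    simp only [mul_sub]
    exact ⟨S.vol_int.sub hI, by rw [integral_sub S.vol_int hI, hv, S.vol, sub_self]⟩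
  have hwig : ∀ y, 2 * M^2 * (4 / m) * κ * Real.exp (-(m/32) * |y|) ≤
      D * ε * Real.exp (-(m/32) * |y|) := fun y => by
    have : 2 * M^2 * (4 / m) * κ = 2 * M^2 * (4 / m) * C3 * ε := by rw [hκd]; ring
    rw [this]; gcongr
  have hfar : ∀ t, 0 < t → t < a / 4 → 2 * M * Real.exp (-(m * a / 8)) ≤
      D * ε * Real.exp (-(m/32) * |t - T|) := fun t ht ht' => by
    have := exp_far h0 hR hm ha (y := t - T) (by rw [abs_of_neg (by linarith)]; linarith)
    calc _ ≤ 2 * M * (16 / (m * R) * ε * Real.exp (-(m/32) * |t - T|)) := by gcongr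
      _ = 2 * M * (16 / (m * R)) * ε * Real.exp (-(m/32) * |t - T|) := by ring
      _ ≤ _ := by gcongr
  rcases le_total 0 (θ T) with hA | hA
  · have h1 : min (θ T) 1 - κ ≤ C2 * ε := by
      rcases le_or_gt (min (θ T) 1) κ with hmin | hmin
      · have : 0 < C2 * ε := by positivity
        linarith
      refine hkey T (by linarith) ε h0 _ _ hq0.1 hq0.2 ?_ ?_
      · intro t ht
        rcases lt_or_ge t (a/4) with ht4 | ht4
        · have h2 := F_left hn hW wb hη (y := t - T) (by linarith)
          have h3 := V_le_one (n := n) hn hW wb (S.mem t)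
          have h4 := hfar t ht ht4
          have h5 : Real.exp (m * (t - T)) ≤ Real.exp (-(m * a / 8)) := by
            apply Real.exp_le_exp.2; nlinarith
          have h6 : 2 * M * Real.exp (m * (t - T)) ≤ 2 * M * Real.exp (-(m * a / 8)) := by gcongr
          linarith
        · have h2 := (abs_le.1 (hθT t ht4)).1
          rw [← hθ t ht4]
          have hab := mul_nonneg hκ0 (abs_nonneg (t - T))
          have h3 := F_anti hn wb hη (a := (t - T) - κ * |t - T|) (b := θ t) (by linarith)
          have h4 := wiggle hn hW wb hη (y := t - T) (a := (t - T) - κ * |t - T|) (b := t - T)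
            hκ0 hκ1 le_rfl (by linarith) (by linarith) (by linarith)
          have h5 := hwig (t - T)
          linarith
      · intro t ht
        have ht4 : a / 4 ≤ t := by linarith [ht.1]
        have hy : |t - T| ≤ 1 := abs_le.2 ⟨by linarith [ht.1], by linarith [ht.2]⟩
        have h2 := (abs_le.1 (hθT t ht4)).1
        have hκy : κ * |t - T| ≤ κ := by nlinarith
        rw [← hθ t ht4]
        have hm1 := min_le_left (θ T) 1
        have hm2 := min_le_right (θ T) 1
        have h3 := F_anti hn wb hη (a := (t - T) + (min (θ T) 1 - κ)) (b := θ t) (by linarith)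
        have h4 := hdrop (t - T) ((t - T) + (min (θ T) 1 - κ)) (by linarith [ht.1]) (by linarith)
          (by linarith [ht.2])
        have : (t - T) + (min (θ T) 1 - κ) - (t - T) = min (θ T) 1 - κ := by ring
        rw [this] at h4
        linarith
    have h2 : min (θ T) 1 ≤ (C2 + C3) * ε := by linarith
    rw [abs_of_nonneg hA]
    rcases min_choice (θ T) 1 with h | h
    · rwa [h] at h2
    · rw [h] at h2; linarith
  · have h1 : min (-θ T) 1 - κ ≤ C2 * ε := by
      rcases le_or_gt (min (-θ T) 1) κ with hmin | hmin
      · have : 0 < C2 * ε := by positivity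
        linarith
      refine hkey T (by linarith) ε h0 _ _ hq0'.1 hq0'.2 ?_ ?_
      · intro t ht
        rcases lt_or_ge t (a/4) with ht4 | ht4
        · have h2 := (abs_le.1 (hθT (a/4) le_rfl)).2
          rw [abs_of_neg (by linarith : a/4 - T < 0)] at h2
          have hθ2 : θ (a/4) ≤ - (a / 8) := by nlinarith
          have h2 := F_left hn hW wb hη (y := θ (a/4)) (by linarith)
          rw [hθ _ le_rfl] at h2
          have hmon : g (a/4) ≤ g t := S.anti (mem_Ici.2 ht.le) (mem_Ici.2 (by linarith)) ht4.le
          have h3 := V_mono hn wb (S.mem _).1 hmon (S.mem t).2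
          have h4 := hfar t ht ht4
          have h5 : Real.exp (m * (θ (a/4))) ≤ Real.exp (-(m * a / 8)) := by
            apply Real.exp_le_exp.2; nlinarith
          have h6 : 2 * M * Real.exp (m * (θ (a/4))) ≤ 2 * M * Real.exp (-(m * a / 8)) := by gcongr
          have h7 := V_le_one (n := n) hn hW wb (eta_mem hη (t - T))
          linarith
        · have h2 := (abs_le.1 (hθT t ht4)).2
          rw [← hθ t ht4]
          have hab := mul_nonneg hκ0 (abs_nonneg (t - T))
          have h3 := F_anti hn wb hη (b := (t - T) + κ * |t - T|) (a := θ t) (by linarith)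
          have h4 := wiggle hn hW wb hη (y := t - T) (b := (t - T) + κ * |t - T|) (a := t - T)
            hκ0 hκ1 (by linarith) (by linarith) (by linarith) (by linarith)
          have h5 := hwig (t - T)
          linarith
      · intro t ht
        have ht4 : a / 4 ≤ t := by linarith [ht.1]
        have hy : |t - T| ≤ 1 := abs_le.2 ⟨by linarith [ht.1], by linarith [ht.2]⟩
        have h2 := (abs_le.1 (hθT t ht4)).2
        have hκy : κ * |t - T| ≤ κ := by nlinarith
        rw [← hθ t ht4]
        have hm1 := min_le_left (-θ T) 1
        have hm2 := min_le_right (-θ T) 1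
        have h3 := F_anti hn wb hη (b := (t - T) - (min (-θ T) 1 - κ)) (a := θ t) (by linarith)
        have h4 := hdrop ((t - T) - (min (-θ T) 1 - κ)) (t - T) (by linarith [ht.1]) (by linarith)
          (by linarith [ht.2])
        have : (t - T) - ((t - T) - (min (-θ T) 1 - κ)) = min (-θ T) 1 - κ := by ring
        rw [this] at h4
        linarith
    have h2 : min (-θ T) 1 ≤ (C2 + C3) * ε := by linarith
    rw [abs_of_nonpos hA]
    rcases min_choice (-θ T) 1 with h | h
    · rwa [h] at h2
    · rw [h] at h2; linarith
end


section
variable {n : ℕ} {W : ℝ → ℝ} {K R m M c δ : ℝ} {η : ℝ → ℝ}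

lemma eta_lip_abs (wb : WB W m M c δ) (hη : TransitionProfile W η) {a b ℓ : ℝ}
    (hℓ : ∀ z ∈ uIcc a b, ℓ ≤ |z|) : |η a - η b| ≤ M * Real.exp (-m * ℓ) * |b - a| := by
  rcases le_total a b with h | h
  · rw [abs_of_nonneg (by linarith [hη.anti.antitone h]), abs_of_nonneg (by linarith)]
    exact eta_lip wb hη h (by rwa [uIcc_of_le h] at hℓ)
  · rw [abs_sub_comm, abs_sub_comm b a, abs_of_nonneg (by linarith [hη.anti.antitone h]),
      abs_of_nonneg (by linarith)]
    exact eta_lip wb hη h (by rwa [uIcc_of_ge h] at hℓ)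

lemma near_est (wb : WB W m M c δ) (hη : TransitionProfile W η) {y z κ : ℝ} (hκ0 : 0 ≤ κ)
    (hκ : κ ≤ 1/2) (h : |z - y| ≤ κ * (1 + |y|)) :
    |η z - η y| ≤ M * Real.exp (m/2) * (1 + 4 / m) * κ * Real.exp (-(m/32) * |y|) := by
  have hM := wb.M0
  have hm := wb.m0
  have hy := abs_nonneg y
  have h12 : κ * (1 + |y|) ≤ 1/2 * (1 + |y|) := by gcongr
  have h1 := eta_lip_abs wb hη (a := y) (b := z) (ℓ := |y|/2 - 1/2) (fun w hw => by
    have h2 := abs_sub_left_of_mem_uIcc hw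
    have h3 := abs_sub_abs_le_abs_sub y w
    rw [abs_sub_comm] at h3
    linarith)
  rw [abs_sub_comm] at h1
  refine h1.trans ?_
  have e : Real.exp (-m * (|y|/2 - 1/2)) = Real.exp (m/2) * Real.exp (-(m/2) * |y|) := by
    rw [← Real.exp_add]; congr 1; ring
  have h4 := mul_exp_le (b := m/2) (x := |y|) (by positivity)
  have h5 : Real.exp (-(m/2/2) * |y|) ≤ Real.exp (-(m/32) * |y|) := by
    apply Real.exp_le_exp.2; nlinarith
  have h6 : Real.exp (-(m/2) * |y|) ≤ Real.exp (-(m/32) * |y|) := by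
    apply Real.exp_le_exp.2; nlinarith
  have h7 : (1 + |y|) * Real.exp (-(m/2) * |y|) ≤ (1 + 4/m) * Real.exp (-(m/32) * |y|) := by
    have h8 : 2 / (m/2) * Real.exp (-(m/2/2) * |y|) ≤ 2 / (m/2) * Real.exp (-(m/32) * |y|) :=
      mul_le_mul_of_nonneg_left h5 (by positivity)
    have : 2 / (m/2) = 4 / m := by field_simp; norm_num
    rw [this] at h8 h4
    linarith
  rw [e]
  calc M * (Real.exp (m/2) * Real.exp (-(m/2) * |y|)) * |z - y|
      ≤ M * (Real.exp (m/2) * Real.exp (-(m/2) * |y|)) * (κ * (1 + |y|)) := by gcongr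
    _ = M * Real.exp (m/2) * κ * ((1 + |y|) * Real.exp (-(m/2) * |y|)) := by ring
    _ ≤ M * Real.exp (m/2) * κ * ((1 + 4/m) * Real.exp (-(m/32) * |y|)) :=
        mul_le_mul_of_nonneg_left h7 (by positivity)
    _ = _ := by ring

set_option maxHeartbeats 1000000 in
lemma conclusion (hn : 2 ≤ n) (hW : DoubleWell W) (wb : WB W m M c δ) (hR : 0 < R) (hK : 0 < K)
    (hη : TransitionProfile W η) :
    ∃ C > 0, ∀ᶠ ε in nhdsWithin (0:ℝ) (Ioi 0), ∀ g g1 g2 E : ℝ → ℝ,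
      Sol n W K R ε g g1 g2 E → ∀ T : ℝ,
      IntegrableOn (fun t => t ^ (n-1) * Vpot n W (η (t - T))) (Ioi 0) →
      ∫ t in Ioi (0:ℝ), t ^ (n-1) * Vpot n W (η (t - T)) = (R / ε) ^ n / n →
      ∀ t > 0, |g t - η (t - T)| ≤ C * ε * Real.exp (-|t - R / ε| / C) := by
  have hM := wb.M0
  have hm := wb.m0
  obtain ⟨C3, hC3, hth⟩ := theta_main hW wb hn hR hK hη
  obtain ⟨C5, hC5, hlp⟩ := loc_profile hn hW wb hR hη
  obtain ⟨C6, hC6, htz⟩ := theta_zero (K := K) hn hW wb hR hη hC3 hC5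
  set D := M * Real.exp (m/2) * (1 + 4 / m) * (C3 + C6) + 16 / (m * R) with hD
  have hD0 : 0 < D := by positivity
  have hDa : M * Real.exp (m/2) * (1 + 4 / m) * (C3 + C6) ≤ D := by
    have : 0 < 16 / (m * R) := by positivity
    linarith
  have hDb : 16 / (m * R) ≤ D := by
    have : 0 < M * Real.exp (m/2) * (1 + 4 / m) * (C3 + C6) := by positivity
    linarith
  set C := D * Real.exp (m/32 * C5) + 32 / m with hC
  have hC0 : 0 < C := by positivity
  refine ⟨C, hC0, ?_⟩
  filter_upwards [ev_pos, hth, hlp, htz, ev_small C3 (b := 1/2) (by norm_num),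
    ev_small C6 (b := 1/2) (by norm_num), ev_big hR (8 + 4 * C5),
    ev_small (C3 + C6) (b := 1/2) (by norm_num)]
    with ε h0 hth hlp htz hs3 hs6 hbig hs g g1 g2 E S T hI hv t ht
  obtain ⟨θ, hθ, hlip⟩ := hth g g1 g2 E S
  have hT := hlp T hI hv
  have hθ0 := htz g g1 g2 E S θ hθ hlip T hI hv hT
  set a := R / ε with ha
  obtain ⟨hT1, hT2⟩ := abs_le.1 hT
  have hTlo : 3 * a / 4 + 2 ≤ T := by linarith
  have hThi : T ≤ 2 * a := by linarith
  have ha0 : 0 < a := by positivity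
  have hTa : a / 4 ≤ T := by linarith
  have hmain : |g t - η (t - T)| ≤ D * ε * Real.exp (-(m/32) * |t - T|) := by
    rcases lt_or_ge t (a/4) with ht4 | ht4
    · have h2 := (abs_le.1 (hlip (a/4) le_rfl T hTa)).2
      rw [abs_of_neg (by linarith : a/4 - T < 0)] at h2
      have hκ : C3 * ε * (-(a/4 - T)) ≤ 1/2 * (-(a/4 - T)) :=
        mul_le_mul_of_nonneg_right (by linarith) (by linarith)
      have hθ2 : θ (a/4) ≤ - (a / 8) := by
        have := (abs_le.1 hθ0).2
        linarith
      have h3 := eta_left wb hη (y := θ (a/4)) (by linarith)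
      rw [hθ _ le_rfl] at h3
      have hmon : g (a/4) ≤ g t := S.anti (mem_Ici.2 ht.le) (mem_Ici.2 (by linarith)) ht4.le
      have h5 : Real.exp (m * (θ (a/4))) ≤ Real.exp (-(m * a / 8)) := by
        apply Real.exp_le_exp.2; nlinarith
      have h6 := eta_left wb hη (y := t - T) (by linarith)
      have h7 : Real.exp (m * (t - T)) ≤ Real.exp (-(m * a / 8)) := by
        apply Real.exp_le_exp.2; nlinarith
      have h8 := exp_far h0 hR hm ha (y := t - T) (by rw [abs_of_neg (by linarith)]; linarith)
      have h9 : |g t - η (t - T)| ≤ Real.exp (-(m * a / 8)) := by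
        have := (S.mem t).2
        have := (eta_mem hη (t - T)).2
        rw [abs_le]; constructor <;> linarith
      refine h9.trans (h8.trans ?_)
      gcongr
    · rw [← hθ t ht4]
      have h1 := hlip t ht4 T hTa
      have h2 : |θ t - (t - T)| ≤ (C3 + C6) * ε * (1 + |t - T|) := by
        have e : θ t - (t - T) = (θ t - θ T - (t - T)) + θ T := by ring
        rw [e]
        refine (abs_add_le _ _).trans ((add_le_add h1 hθ0).trans ?_)
        have h3 : 0 ≤ C3 * ε := by positivity
        have h4 : 0 ≤ C6 * ε * |t - T| := by positivity
        nlinarith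
      refine (near_est wb hη (by positivity) (by linarith) h2).trans ?_
      calc _ = M * Real.exp (m/2) * (1 + 4 / m) * (C3 + C6) * ε * Real.exp (-(m/32) * |t - T|) := by
            ring
        _ ≤ _ := by gcongr
  refine hmain.trans ?_
  have habs : |t - a| ≤ |t - T| + C5 := by
    have : t - a = (t - T) + (T - a) := by ring
    rw [this]
    exact (abs_add_le _ _).trans (by linarith)
  have h1 : Real.exp (-(m/32) * |t - T|) ≤ Real.exp (m/32 * C5) * Real.exp (-|t - a| / C) := by
    rw [← Real.exp_add]
    apply Real.exp_le_exp.2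
    have h2 : |t - a| / C ≤ m/32 * |t - a| := by
      rw [div_le_iff₀ hC0]
      have h3 : 1 ≤ m / 32 * C := by
        have : 1 = m / 32 * (32 / m) := by field_simp
        rw [this]
        have : 0 < D * Real.exp (m/32 * C5) := by positivity
        gcongr; linarith
      have := abs_nonneg (t - a)
      nlinarith
    rw [neg_div]
    nlinarith
  calc D * ε * Real.exp (-(m/32) * |t - T|)
      ≤ D * ε * (Real.exp (m/32 * C5) * Real.exp (-|t - a| / C)) := by gcongr
    _ = D * Real.exp (m/32 * C5) * ε * Real.exp (-|t - a| / C) := by ring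
    _ ≤ C * ε * Real.exp (-|t - a| / C) := by
        have : D * Real.exp (m/32 * C5) ≤ C := by
          have : 0 < 32 / m := by positivity
          linarith
        gcongr
end


section
variable {n : ℕ} {W : ℝ → ℝ} {η : ℝ → ℝ}

lemma eta_contDiff (hW : DoubleWell W) (hη : TransitionProfile W η) : ContDiff ℝ 2 η := by
  have hd : Differentiable ℝ η := fun s => (hη.ode s).differentiableAt
  have hder : deriv η = fun s => -√(W (η s)) := funext fun s => (hη.ode s).deriv
  have hWat : ∀ s, ContDiffAt ℝ 2 W (η s) := fun s =>
    hW.contDiffOn.contDiffAt (Icc_mem_nhds (hη.mem s).1 (hη.mem s).2)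
  have h1 : ContDiff ℝ 1 η := by
    rw [contDiff_one_iff_deriv]
    refine ⟨hd, ?_⟩
    rw [hder, continuous_iff_continuousAt]
    intro s
    have : ContinuousAt (fun s => W (η s)) s :=
      ContinuousAt.comp (hWat s).continuousAt (hd s).continuousAt
    exact (this.sqrt).neg
  have h2 : ContDiff ℝ (1 + 1) η := by
    rw [contDiff_succ_iff_deriv]
    refine ⟨hd, by simp, ?_⟩
    rw [hder, contDiff_iff_contDiffAt]
    intro s
    have : ContDiffAt ℝ 1 (fun s => W (η s)) s :=
      ContDiffAt.comp s ((hWat s).of_le (by norm_num)) h1.contDiffAt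
    exact (this.sqrt (hW.pos_on _ (hη.mem s)).ne').neg
  have e : (1 + 1 : WithTop ℕ∞) = 2 := by norm_num
  rwa [e] at h2

/-- The distinguished unit vector. -/
noncomputable def e0 (n : ℕ) (hn : 0 < n) : En n := EuclideanSpace.single (⟨0, hn⟩ : Fin n) 1

lemma norm_e0 (hn : 0 < n) : ‖e0 n hn‖ = 1 := by simp [e0]

lemma norm_smul_e0 (hn : 0 < n) {r : ℝ} (hr : 0 ≤ r) : ‖r • e0 n hn‖ = r := by
  rw [norm_smul, norm_e0, mul_one, Real.norm_of_nonneg hr]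

lemma norm_add_single (hn : 0 < n) (r s : ℝ) {i : Fin n} (hi : i ≠ ⟨0, hn⟩) :
    ‖r • e0 n hn + s • EuclideanSpace.single i (1:ℝ)‖ = √(r^2 + s^2) := by
  have h : inner ℝ (r • e0 n hn) (s • EuclideanSpace.single i (1:ℝ)) = 0 := by
    rw [inner_smul_left, inner_smul_right, e0, EuclideanSpace.inner_single_left]
    simp [hi.symm]
  have := norm_add_sq_eq_norm_sq_add_norm_sq_of_inner_eq_zero _ _ h
  rw [norm_smul, norm_smul, norm_e0, EuclideanSpace.norm_single] at this
  simp only [norm_one, mul_one, Real.norm_eq_abs] at this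
  rw [abs_mul_abs_self, abs_mul_abs_self] at this
  rw [← Real.sqrt_sq (norm_nonneg _)]
  congr 1
  rw [sq, this]; ring

lemma line_deriv {v : En n → ℝ} (hv : Differentiable ℝ v) (x e : En n) (s : ℝ) :
    HasDerivAt (fun s : ℝ => v (x + s • e)) (fderiv ℝ v (x + s • e) e) s := by
  have h1 : HasDerivAt (fun s : ℝ => x + s • e) e s := by
    simpa using ((hasDerivAt_id s).smul_const e).const_add x
  exact (hv (x + s • e)).hasFDerivAt.comp_hasDerivAt s h1

lemma lap_radial (hn : 0 < n) {v : En n → ℝ} (hv : ContDiff ℝ 2 v) {φ φ1 φ2 : ℝ → ℝ}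
    (h0 : ∀ r, v (r • e0 n hn) = φ r) (hrad : ∀ x, v x = φ ‖x‖)
    (hφ : ∀ r, HasDerivAt φ (φ1 r) r) (hφ1 : ∀ r, HasDerivAt φ1 (φ2 r) r) {r : ℝ} (hr : 0 < r) :
    lap n v (r • e0 n hn) = φ2 r + ((n:ℝ) - 1) / r * φ1 r := by
  have hvd : Differentiable ℝ v := hv.differentiable (by norm_num)
  have hu : ∀ e : En n, Differentiable ℝ (fun y => fderiv ℝ v y e) := fun e => by
    have : ContDiff ℝ 1 (fderiv ℝ v) := hv.fderiv_right (by norm_num)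
    exact (this.differentiable (by norm_num)).clm_apply (differentiable_const e)
  have hterm : ∀ i : Fin n, fderiv ℝ (fun y => fderiv ℝ v y (EuclideanSpace.single i 1))
      (r • e0 n hn) (EuclideanSpace.single i 1) =
      φ1 r / r + if i = ⟨0, hn⟩ then φ2 r - φ1 r / r else 0 := by
    intro i
    have hA := line_deriv (hu (EuclideanSpace.single i 1)) (r • e0 n hn) (EuclideanSpace.single i 1) 0
    rw [zero_smul, add_zero] at hA
    by_cases hi : i = ⟨0, hn⟩
    · rw [if_pos hi]
      have hB : (fun s : ℝ => fderiv ℝ v (r • e0 n hn + s • EuclideanSpace.single i 1)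
          (EuclideanSpace.single i 1)) = fun s => φ1 (r + s) := by
        funext s
        have h1 := line_deriv hvd (r • e0 n hn) (EuclideanSpace.single i 1) s
        have h2 : (fun s : ℝ => v (r • e0 n hn + s • EuclideanSpace.single i 1)) =
            fun s => φ (r + s) := by
          funext s
          rw [hi, ← h0, add_smul]; rfl
        rw [h2] at h1
        exact h1.unique ((hφ (r + s)).comp_const_add r s)
      rw [hB] at hA
      have := hA.unique ((hφ1 (r + 0)).comp_const_add r 0)
      rw [this, add_zero]; ring
    · rw [if_neg hi, add_zero]
      have hpos : ∀ s : ℝ, 0 < r^2 + s^2 := fun s => by positivity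
      have hρ : ∀ s : ℝ, HasDerivAt (fun s : ℝ => √(r^2 + s^2)) (s / √(r^2+s^2)) s := fun s => by
        have h1 : HasDerivAt (fun s : ℝ => r^2 + s^2) (2 * s) s := by
          simpa using (hasDerivAt_pow 2 s).const_add (r^2)
        refine (h1.sqrt (hpos s).ne').congr_deriv ?_
        rw [mul_div_mul_left _ _ two_ne_zero]
      have hB : (fun s : ℝ => fderiv ℝ v (r • e0 n hn + s • EuclideanSpace.single i 1)
          (EuclideanSpace.single i 1)) = fun s => s * (φ1 (√(r^2+s^2)) / √(r^2+s^2)) := by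
        funext s
        have h1 := line_deriv hvd (r • e0 n hn) (EuclideanSpace.single i 1) s
        have h2 : (fun s : ℝ => v (r • e0 n hn + s • EuclideanSpace.single i 1)) =
            fun s => φ (√(r^2+s^2)) := by
          funext s
          rw [hrad, norm_add_single hn r s hi]
        rw [h2] at h1
        have h3 := h1.unique ((hφ (√(r^2+s^2))).comp s (hρ s))
        rw [h3]; ring
      rw [hB] at hA
      have hk : DifferentiableAt ℝ (fun s => φ1 (√(r^2+s^2)) / √(r^2+s^2)) 0 :=
        (((hφ1 _).comp (0:ℝ) (hρ 0)).differentiableAt).div (hρ 0).differentiableAt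
          (Real.sqrt_pos.2 (hpos 0)).ne'
      have h4 := hA.unique ((hasDerivAt_id (0:ℝ)).mul hk.hasDerivAt)
      rw [h4]
      have : √(r^2 + 0^2) = r := by
        rw [show r^2 + (0:ℝ)^2 = r^2 by ring, Real.sqrt_sq hr.le]
      simp only [id, one_mul, zero_mul, add_zero, this]
  rw [lap, Finset.sum_congr rfl (fun i _ => hterm i), Finset.sum_add_distrib]
  simp
  ring

lemma sol_of {K ε : ℝ} (hn : 2 ≤ n) (hK : 0 < K) (hε : 0 < ε) {v E : En n → ℝ}
    (hv : ContDiff ℝ 2 v) (hmem : ∀ x, v x ∈ Icc (0:ℝ) 1) (hrd : RadialDecreasing n v)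
    (hvol : (∫ x : En n, Vpot n W (v x)) = 1) (hE : ∀ x, |E x| ≤ K)
    (hode : ∀ x : En n, -2 * ε ^ 2 * lap n v x
            = ε * v x * (1 - v x) * E x - derivWithin W (Icc 0 1) (v x)) :
    ∃ g g1 g2 E' : ℝ → ℝ, ContDiff ℝ 2 g ∧ (∀ x, v x = g (‖x‖ / ε)) ∧
      Sol n W K (R0 n) ε g g1 g2 E' := by
  have hn0 : 0 < n := by omega
  obtain ⟨ζ, hζ, hvζ⟩ := hrd
  set φ : ℝ → ℝ := fun r => v (r • e0 n hn0) with hφd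
  have hφc : ContDiff ℝ 2 φ := hv.comp (contDiff_id.smul contDiff_const)
  have hrad : ∀ x, v x = φ ‖x‖ := fun x => by
    rw [hφd]; simp only
    rw [hvζ, hvζ, norm_smul_e0 hn0 (norm_nonneg x)]
  have hd1 : ∀ r, HasDerivAt φ (deriv φ r) r := fun r =>
    (hφc.differentiable (by norm_num) r).hasDerivAt
  have hφ1c : ContDiff ℝ 1 (deriv φ) := by
    have : ContDiff ℝ (1 + 1) φ := by
      have e : (1 + 1 : WithTop ℕ∞) = 2 := by norm_num
      rwa [e]
    exact (contDiff_succ_iff_deriv.1 this).2.2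
  have hd2 : ∀ r, HasDerivAt (deriv φ) (deriv (deriv φ) r) r := fun r =>
    (hφ1c.differentiable (by norm_num) r).hasDerivAt
  have heven : ∀ r, φ (-r) = φ r := fun r => by
    simp only [hφd]; rw [hvζ, hvζ, neg_smul, norm_neg]
  have hz : deriv φ 0 = 0 := by
    have h1 : HasDerivAt (fun r => φ (-r)) (-deriv φ 0) 0 := by
      have h2 : HasDerivAt φ (deriv φ 0) (-0) := by rw [neg_zero]; exact hd1 0
      have := h2.comp (0:ℝ) (hasDerivAt_neg (0:ℝ))
      simpa using! this
    have h3 : (fun r => φ (-r)) = φ := funext heven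
    rw [h3] at h1
    have := h1.unique (hd1 0)
    linarith
  have hanti : AntitoneOn φ (Ici 0) := by
    intro x hx y hy hxy
    simp only [hφd]
    rw [hvζ, hvζ, norm_smul_e0 hn0 hx, norm_smul_e0 hn0 hy]
    exact hζ hx hy hxy
  have hneg : ∀ r ≥ 0, deriv φ r ≤ 0 := fun r hr => by
    rw [← (hd1 r).hasDerivWithinAt.derivWithin (uniqueDiffOn_Ici (0:ℝ) r hr)]
    exact hanti.derivWithin_nonpos
  have hlin : ∀ t : ℝ, HasDerivAt (fun t : ℝ => ε * t) ε t := fun t => by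
    simpa using (hasDerivAt_id t).const_mul ε
  have hvg : ∀ x : En n, v x = (fun t => φ (ε * t)) (‖x‖ / ε) := fun x => by
    simp only; rw [mul_div_cancel₀ _ hε.ne', hrad]
  have hvol' : ∫ x : En n, (fun t => Vpot n W (φ (ε * t))) (‖x‖ / ε) = 1 := by
    rw [← hvol]; congr 1; funext x; rw [hvg x]
  obtain ⟨hi1, hi2⟩ := vol_radial hn hε (fun t => Vpot n W (φ (ε * t))) hvol'
  refine ⟨fun t => φ (ε * t), fun t => ε * deriv φ (ε * t), fun t => ε^2 * deriv (deriv φ) (ε * t),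
    fun t => E ((ε * t) • e0 n hn0), hφc.comp (contDiff_const.mul contDiff_id), hvg, ?_⟩
  exact {
    hn := hn
    K0 := hK
    R0 := R0_pos n
    ε0 := hε
    hg := fun t => by
      have := (hd1 (ε * t)).comp t (hlin t)
      exact this.congr_deriv (by ring)
    hg1 := fun t => by
      have := ((hd2 (ε * t)).comp t (hlin t)).const_mul ε
      exact this.congr_deriv (by ring)
    g10 := by simp [hz]
    neg := fun t ht => by
      have := hneg (ε * t) (by positivity)
      nlinarith
    mem := fun t => hmem _
    ode := fun t ht => by
      have h1 := hode ((ε * t) • e0 n hn0)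
      rw [lap_radial hn0 hv (fun r => rfl) hrad hd1 hd2 (by positivity : 0 < ε * t)] at h1
      have h2 : v ((ε * t) • e0 n hn0) = φ (ε * t) := rfl
      rw [h2] at h1
      have h3 : 2 * (ε^2 * deriv (deriv φ) (ε * t) + ((n:ℝ) - 1) / t * (ε * deriv φ (ε * t))) =
          2 * ε^2 * (deriv (deriv φ) (ε * t) + ((n:ℝ) - 1) / (ε * t) * deriv φ (ε * t)) := by
        field_simp
      rw [h3]
      linarith
    hE := fun t => hE _
    vol_int := hi1
    vol := hi2 }

end


theorem statement8 (n : ℕ) (hn : 2 ≤ n) (W : ℝ → ℝ) (hW : DoubleWell W)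
    (η : ℝ → ℝ) (hη : TransitionProfile W η) :
    ∃ ℓ₀ > (0:ℝ), ∀ K > (0:ℝ), ∃ ε₁ > (0:ℝ), ∃ C > (0:ℝ),
      ∀ ε : ℝ, 0 < ε → ε < ε₁ →
      ∀ v : En n → ℝ, ContDiff ℝ 2 v → (∀ x, v x ∈ Icc (0:ℝ) 1) →
        RadialDecreasing n v → (∫ x : En n, Vpot n W (v x)) = 1 →
        AC n W ε v ≤ 2 * (n : ℝ) * ballVol n ^ ((1 : ℝ) / (n : ℝ)) + ℓ₀ →
      ∀ E : En n → ℝ, Continuous E → Radial n E → (∀ x, |E x| ≤ K) →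
        (∀ x : En n, -2 * ε ^ 2 * lap n v x
            = ε * v x * (1 - v x) * E x - derivWithin W (Icc 0 1) (v x)) →
      ∀ τ : ℝ, (∫ x : En n, Vpot n W (η ((‖x‖ - R0 n) / ε - τ))) = 1 →
        ∃ f : ℝ → ℝ, ContDiffOn ℝ 2 f (Ioi (-(R0 n) / ε)) ∧
          (∀ x : En n, v x = η ((‖x‖ - R0 n) / ε - τ) + f ((‖x‖ - R0 n) / ε)) ∧
          ∀ s : ℝ, -(R0 n) / ε < s → |f s| ≤ C * ε * Real.exp (-|s| / C) := by
  obtain ⟨m, M, c, δ, wb⟩ := exists_WB hW hη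
  refine ⟨1, one_pos, fun K hK => ?_⟩
  obtain ⟨C, hC, hconc⟩ := conclusion hn hW wb (R0_pos n) hK hη
  obtain ⟨ε₁, hε₁, hall⟩ := (nhdsGT_basis (0:ℝ)).eventually_iff.1 hconc
  refine ⟨ε₁, hε₁, C, hC, ?_⟩
  intro ε hε hεlt v hv hmem hrd hvol _ E _ _ hEK hode τ hz
  obtain ⟨g, g1, g2, E', hgc, hvg, S⟩ := sol_of hn hK hε hv hmem hrd hvol hEK hode
  have hz' : ∫ x : En n, (fun t => Vpot n W (η (t - (R0 n / ε + τ)))) (‖x‖ / ε) = 1 := by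
    rw [← hz]; congr 1; funext x; simp only; congr 2; ring
  obtain ⟨hi1, hi2⟩ := vol_radial hn hε (fun t => Vpot n W (η (t - (R0 n / ε + τ)))) hz'
  have hfin := hall ⟨hε, hεlt⟩ g g1 g2 E' S (R0 n / ε + τ) hi1 hi2
  refine ⟨fun s => g (s + R0 n / ε) - η (s - τ), ?_, ?_, ?_⟩
  · exact ((hgc.comp (contDiff_id.add contDiff_const)).sub
      ((eta_contDiff hW hη).comp (contDiff_id.sub contDiff_const))).contDiffOn
  · intro x
    have e : (‖x‖ - R0 n) / ε + R0 n / ε = ‖x‖ / ε := by ring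
    simp only [e, hvg x]; ring
  · intro s hs
    have h := hfin (s + R0 n / ε) (by rw [neg_div] at hs; linarith)
    have e1 : s + R0 n / ε - (R0 n / ε + τ) = s - τ := by ring
    have e2 : s + R0 n / ε - R0 n / ε = s := by ring
    rw [e1, e2] at h
    exact h
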